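/- arXiv:0905.2626 — 5 statements merged into one kernel-verified Lean document; each statement's English description precedes it below -/
import Mathlib

section
/- For every t > 0 the function p_t is integrable on ℝ^d and its Fourier transform recovers the stable symbol: ∫_{ℝ^d} p_t(x) e^{i⟨x, ξ⟩} dx = e^{−t|ξ|^α} for every ξ ∈ ℝ^d. -/
open MeasureTheory Real Filter
open scoped RealInnerProductSpace Topology

/-!
For `0 < β ≤ 1` the function `1 - (1 - z) ^ β` has nonnegative Taylor coefficients at `0`. Hence
every power of `1 - (1 - exp (-s * ‖ξ‖ ^ 2)) ^ β` is a limit of nonnegative combinations of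
Gaussians, and so has nonnegative Fourier transform. With `s = n ^ (-1 / β)`, the `n`-th powers
converge to `exp (-‖ξ‖ ^ (2 * β))`, so the stable symbol has nonnegative Fourier transform too. A
nonnegative Fourier transform of an integrable function that is continuous at `0` is integrable:
its integrals against Gaussians increasing to `1` stay bounded, and Fatou's lemma applies. Fourier
inversion then recovers the symbol from the kernel.
-/

section BinomialSeries

lemma ascPochhammer_eval_neg_nonpos {β : ℝ} (h0 : 0 ≤ β) (h1 : β ≤ 1) (k : ℕ) :
    (ascPochhammer ℝ (k + 1)).eval (-β) ≤ 0 := by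
  induction k with
  | zero => simpa using h0
  | succ k ih =>
    rw [ascPochhammer_succ_eval]
    refine mul_nonpos_of_nonpos_of_nonneg ih ?_
    push_cast
    linarith [k.cast_nonneg (α := ℝ)]

lemma multichoose_neg_nonpos {β : ℝ} (h0 : 0 ≤ β) (h1 : β ≤ 1) (k : ℕ) :
    Ring.multichoose (-β) (k + 1) ≤ 0 := by
  have h := Ring.factorial_nsmul_multichoose_eq_ascPochhammer (-β) (k + 1)
  rw [Polynomial.ascPochhammer_smeval_eq_eval, nsmul_eq_mul] at h
  exact nonpos_of_mul_nonpos_right (h ▸ ascPochhammer_eval_neg_nonpos h0 h1 k)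
    (by positivity)

lemma hasSum_multichoose_neg_mul_pow (β : ℝ) {z : ℝ} (hz : z ∈ Set.Ico (0 : ℝ) 1) :
    HasSum (fun k ↦ Ring.multichoose (-β) k * z ^ k) ((1 - z) ^ β) := by
  have h := (one_div_one_sub_rpow_hasFPowerSeriesOnBall_zero (-β)).hasSum
    (y := z) (by simpa [enorm_eq_nnnorm, ← NNReal.coe_lt_coe, abs_of_nonneg hz.1] using hz.2)
  simpa [FormalMultilinearSeries.ofScalars_apply_eq, ← Ring.multichoose_eq,
    rpow_neg (sub_nonneg.2 hz.2.le), mul_comm] using h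

lemma hasSum_neg_multichoose_neg_mul_pow (β : ℝ) {z : ℝ} (hz : z ∈ Set.Ico (0 : ℝ) 1) :
    HasSum (fun k ↦ -Ring.multichoose (-β) (k + 1) * z ^ (k + 1)) (1 - (1 - z) ^ β) := by
  have h := (hasSum_nat_add_iff' 1).2 (hasSum_multichoose_neg_mul_pow β hz)
  simpa using h.neg

lemma hasSum_of_tendsto_powerSeries {a : ℕ → ℝ} (ha : ∀ k, 0 ≤ a k) {h : ℝ → ℝ} {l : ℝ}
    (hsum : ∀ z ∈ Set.Ico (0 : ℝ) 1, HasSum (fun k ↦ a k * z ^ k) (h z))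
    (hlim : Tendsto h (𝓝[<] 1) (𝓝 l)) : HasSum a l := by
  have hIco : ∀ᶠ z : ℝ in 𝓝[<] 1, z ∈ Set.Ico (0 : ℝ) 1 :=
    Ico_mem_nhdsLT zero_lt_one
  have hpartial (N : ℕ) : ∑ k ∈ Finset.range N, a k ≤ l := by
    have hpoly : Tendsto (fun z : ℝ ↦ ∑ k ∈ Finset.range N, a k * z ^ k) (𝓝[<] 1)
        (𝓝 (∑ k ∈ Finset.range N, a k * 1 ^ k)) :=
      (Continuous.tendsto (by fun_prop) 1).mono_left nhdsWithin_le_nhds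
    simp only [one_pow, mul_one] at hpoly
    refine le_of_tendsto_of_tendsto hpoly hlim (hIco.mono fun z hz ↦ ?_)
    exact sum_le_hasSum _ (fun k _ ↦ mul_nonneg (ha k) (pow_nonneg hz.1 k)) (hsum z hz)
  have hsummable : Summable a := summable_of_sum_range_le ha hpartial
  have habel := Real.tendsto_tsum_powerSeries_nhdsWithin_lt hsummable.hasSum.tendsto_sum_nat
  have hlim' := hlim.congr' (hIco.mono fun z hz ↦ ((hsum z hz).tsum_eq).symm)
  exact tendsto_nhds_unique habel hlim' ▸ hsummable.hasSum

lemma exists_nonneg_hasSum_one_sub_rpow {β : ℝ} (h0 : 0 < β) (h1 : β ≤ 1) :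
    ∃ a : ℕ → NNReal, ∀ z ∈ Set.Icc (0 : ℝ) 1,
      HasSum (fun k ↦ a k * z ^ k) (1 - (1 - z) ^ β) := by
  let a (k : ℕ) : ℝ := if k = 0 then 0 else -Ring.multichoose (-β) k
  have ha : ∀ k, 0 ≤ a k
    | 0 => by simp [a]
    | k + 1 => by simpa [a] using multichoose_neg_nonpos h0.le h1 k
  have hsum : ∀ z ∈ Set.Ico (0 : ℝ) 1, HasSum (fun k ↦ a k * z ^ k) (1 - (1 - z) ^ β) := by
    intro z hz
    rw [← hasSum_nat_add_iff' 1]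
    simpa [a] using hasSum_neg_multichoose_neg_mul_pow β hz
  have hlim : Tendsto (fun z : ℝ ↦ 1 - (1 - z) ^ β) (𝓝[<] 1) (𝓝 1) := by
    have hcont : Continuous fun z : ℝ ↦ 1 - (1 - z) ^ β :=
      continuous_const.sub ((continuous_const.sub continuous_id).rpow_const fun _ ↦ .inr h0.le)
    simpa [h0.ne'] using (hcont.tendsto 1).mono_left nhdsWithin_le_nhds
  refine ⟨fun k ↦ ⟨a k, ha k⟩, fun z hz ↦ ?_⟩
  rcases hz.2.lt_or_eq with hz1 | rfl
  · exact hsum z ⟨hz.1, hz1⟩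
  · simpa [h0.ne'] using! hasSum_of_tendsto_powerSeries ha hsum hlim

end BinomialSeries

lemma tendsto_one_sub_one_sub_exp_rpow_pow {β u : ℝ} (hβ : 0 < β) (hu : 0 ≤ u) :
    Tendsto (fun n : ℕ ↦ (1 - (1 - exp (-((n : ℝ) ^ (-β⁻¹) * u))) ^ β) ^ n) atTop
      (𝓝 (exp (-u ^ β))) := by
  have hscale : Tendsto (fun n : ℕ ↦ (n : ℝ) ^ (-β⁻¹)) atTop (𝓝[≠] 0) := by
    refine tendsto_nhdsWithin_iff.2 ⟨?_, ?_⟩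
    · exact (tendsto_rpow_neg_atTop (inv_pos.2 hβ)).comp tendsto_natCast_atTop_atTop
    · filter_upwards [eventually_gt_atTop 0] with n hn
      exact (rpow_pos_of_pos (Nat.cast_pos.2 hn) _).ne'
  have hderiv : HasDerivAt (fun m : ℝ ↦ 1 - exp (-(m * u))) u 0 := by
    simpa using ((hasDerivAt_mul_const (x := (0 : ℝ)) u).neg.exp).const_sub 1
  have hslope := hderiv.tendsto_slope_zero.comp hscale
  have hpow := hslope.rpow_const (p := β) (.inr hβ.le)
  have hmul : Tendsto (fun n : ℕ ↦ (n : ℝ) * -(1 - exp (-((n : ℝ) ^ (-β⁻¹) * u))) ^ β) atTop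
      (𝓝 (-u ^ β)) := by
    refine hpow.neg.congr' ?_
    filter_upwards [eventually_gt_atTop 0] with n hn
    have hexp : 0 ≤ 1 - exp (-((n : ℝ) ^ (-β⁻¹) * u)) := by
      rw [sub_nonneg, exp_le_one_iff, neg_nonpos]
      positivity
    have hn' : (0 : ℝ) < n := Nat.cast_pos.2 hn
    have hcancel : (((n : ℝ) ^ (-β⁻¹))⁻¹) ^ β = n := by
      rw [rpow_neg hn'.le, inv_inv, rpow_inv_rpow hn'.le hβ.ne']
    simp only [Function.comp_apply, zero_add, zero_mul, neg_zero, exp_zero, sub_self, sub_zero,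
      smul_eq_mul]
    rw [mul_rpow (by positivity) hexp, hcancel, mul_neg]
  simpa only [sub_eq_add_neg] using Real.tendsto_one_add_pow_exp_of_tendsto hmul

lemma integrable_of_tendsto_integral {Ω : Type*} [MeasurableSpace Ω] {μ : Measure Ω}
    {F : ℕ → Ω → ℝ} {f : Ω → ℝ} {L : ℝ} (hF : ∀ n, Integrable (F n) μ)
    (hF0 : ∀ n, 0 ≤ᵐ[μ] F n) (hlim : ∀ᵐ x ∂μ, Tendsto (F · x) atTop (𝓝 (f x)))
    (hint : Tendsto (fun n ↦ ∫ x, F n x ∂μ) atTop (𝓝 L)) : Integrable f μ := by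
  have hf : AEStronglyMeasurable f μ :=
    aestronglyMeasurable_of_tendsto_ae atTop (fun n ↦ (hF n).aestronglyMeasurable) hlim
  have hlim_enorm : ∀ᵐ x ∂μ, liminf (fun n ↦ ‖F n x‖ₑ) atTop = ‖f x‖ₑ :=
    hlim.mono fun x hx ↦ (hx.enorm).liminf_eq
  have hnorm (n : ℕ) : ∫⁻ x, ‖F n x‖ₑ ∂μ = ENNReal.ofReal (∫ x, F n x ∂μ) := by
    rw [ofReal_integral_eq_lintegral_ofReal (hF n) (hF0 n)]
    exact lintegral_congr_ae ((hF0 n).mono fun x hx ↦ Real.enorm_of_nonneg hx)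
  refine ⟨hf, ?_⟩
  calc ∫⁻ x, ‖f x‖ₑ ∂μ
    _ = ∫⁻ x, liminf (fun n ↦ ‖F n x‖ₑ) atTop ∂μ :=
        lintegral_congr_ae (hlim_enorm.mono fun x hx ↦ hx.symm)
    _ ≤ liminf (fun n ↦ ∫⁻ x, ‖F n x‖ₑ ∂μ) atTop :=
        lintegral_liminf_le' fun n ↦ (hF n).aestronglyMeasurable.enorm
    _ = ENNReal.ofReal L := by
        simp only [hnorm]
        exact (ENNReal.tendsto_ofReal hint).liminf_eq
    _ < ⊤ := ENNReal.ofReal_lt_top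

variable {V : Type*} [NormedAddCommGroup V] [InnerProductSpace ℝ V] [FiniteDimensional ℝ V]
  [MeasurableSpace V] [BorelSpace V]

/-- The unnormalised cosine transform of `f`, i.e. the Fourier transform of an even real function
in the convention `∫ f ξ * exp (I * ⟪x, ξ⟫)`. -/
noncomputable def cosTransform (f : V → ℝ) (x : V) : ℝ :=
  ∫ ξ, f ξ * cos ⟪x, ξ⟫

lemma integrable_mul_cos_inner {f : V → ℝ} (hf : Integrable f) (x : V) :
    Integrable fun ξ ↦ f ξ * cos ⟪x, ξ⟫ :=
  hf.mul_bdd (c := 1) (Continuous.aestronglyMeasurable (by fun_prop))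
    (.of_forall fun ξ ↦ abs_cos_le_one _)

lemma tendsto_cosTransform_of_dominated {ι : Type*} {l : Filter ι} [l.IsCountablyGenerated]
    {F : ι → V → ℝ} {f bound : V → ℝ} (hF : ∀ᶠ i in l, AEStronglyMeasurable (F i))
    (hbound : ∀ᶠ i in l, ∀ᵐ ξ, |F i ξ| ≤ bound ξ) (hint : Integrable bound)
    (hlim : ∀ᵐ ξ, Tendsto (F · ξ) l (𝓝 (f ξ))) (x : V) :
    Tendsto (fun i ↦ cosTransform (F i) x) l (𝓝 (cosTransform f x)) := by
  refine tendsto_integral_filter_of_dominated_convergence bound ?_ ?_ hint ?_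
  · filter_upwards [hF] with i hi
    exact hi.mul (Continuous.aestronglyMeasurable (by fun_prop))
  · filter_upwards [hbound] with i hi
    filter_upwards [hi] with ξ hξ
    rw [norm_mul, norm_eq_abs, norm_eq_abs]
    exact (mul_le_of_le_one_right (abs_nonneg _) (abs_cos_le_one _)).trans hξ
  · filter_upwards [hlim] with ξ hξ
    exact hξ.mul_const _

lemma integrable_exp_neg_mul_sq_norm {δ : ℝ} (hδ : 0 < δ) :
    Integrable fun ξ : V ↦ exp (-δ * ‖ξ‖ ^ 2) := by
  refine .of_integral_ne_zero ?_
  rw [GaussianFourier.integral_rexp_neg_mul_sq_norm hδ]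
  positivity

lemma cosTransform_exp_neg_mul_sq_norm {δ : ℝ} (hδ : 0 < δ) (x : V) :
    cosTransform (fun ξ ↦ exp (-δ * ‖ξ‖ ^ 2)) x =
      (π / δ) ^ (Module.finrank ℝ V / 2 : ℝ) * exp (-‖x‖ ^ 2 / (4 * δ)) := by
  have hδ' : 0 < (δ : ℂ).re := hδ
  have hre (ξ : V) : exp (-δ * ‖ξ‖ ^ 2) * cos ⟪x, ξ⟫ =
      RCLike.re (Complex.exp (-δ * ‖ξ‖ ^ 2 + Complex.I * ⟪x, ξ⟫)) := by
    simp [Complex.exp_re, ← Complex.ofReal_pow]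
  have hval : ((π : ℂ) / δ) ^ (Module.finrank ℝ V / 2 : ℂ) *
      Complex.exp (Complex.I ^ 2 * ‖x‖ ^ 2 / (4 * δ)) =
      ((π / δ) ^ (Module.finrank ℝ V / 2 : ℝ) * exp (-‖x‖ ^ 2 / (4 * δ)) : ℝ) := by
    push_cast [Complex.ofReal_cpow (div_nonneg pi_nonneg hδ.le)]
    simp
  simp only [cosTransform, hre]
  rw [integral_re (GaussianFourier.integrable_cexp_neg_mul_sq_norm_add hδ' Complex.I x),
    GaussianFourier.integral_cexp_neg_mul_sq_norm_add hδ' Complex.I x, hval]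
  exact Complex.ofReal_re _

/-- A real function is *Fourier nonnegative* when its Fourier transform is nonnegative in the
sense of distributions. This is expressed by the nonnegativity of the cosine transform after
multiplication by any Gaussian, so that no integrability of the function itself is needed. -/
def IsFourierNonneg (F : V → ℝ) : Prop :=
  ∀ δ : ℝ, 0 < δ → ∀ x, 0 ≤ cosTransform (fun ξ ↦ exp (-δ * ‖ξ‖ ^ 2) * F ξ) x

namespace IsFourierNonneg

lemma of_tendsto {ι : Type*} {l : Filter ι} [l.NeBot] [l.IsCountablyGenerated]
    {F : ι → V → ℝ} {f : V → ℝ} {C : ℝ}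
    (hF : ∀ i, IsFourierNonneg (F i)) (hmeas : ∀ i, AEStronglyMeasurable (F i))
    (hbound : ∀ i ξ, |F i ξ| ≤ C) (hlim : ∀ ξ, Tendsto (F · ξ) l (𝓝 (f ξ))) :
    IsFourierNonneg f := by
  intro δ hδ x
  refine ge_of_tendsto' (tendsto_cosTransform_of_dominated
    (bound := fun ξ ↦ exp (-δ * ‖ξ‖ ^ 2) * C) (.of_forall fun i ↦ ?_)
    (.of_forall fun i ↦ .of_forall fun ξ ↦ ?_)
    ((integrable_exp_neg_mul_sq_norm hδ).mul_const C)
    (.of_forall fun ξ ↦ (hlim ξ).const_mul _) x) fun i ↦ hF i δ hδ x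
  · exact (integrable_exp_neg_mul_sq_norm hδ).aestronglyMeasurable.mul (hmeas i)
  · rw [abs_mul, abs_exp]
    gcongr
    exact hbound i ξ

lemma aeval_exp_neg_mul_sq_norm (Q : Polynomial NNReal) {s : ℝ} (hs : 0 ≤ s) :
    IsFourierNonneg fun ξ : V ↦ Q.aeval (exp (-(s * ‖ξ‖ ^ 2))) := by
  intro δ hδ x
  have hsum (ξ : V) : exp (-δ * ‖ξ‖ ^ 2) * Q.aeval (exp (-(s * ‖ξ‖ ^ 2))) * cos ⟪x, ξ⟫ =
      ∑ k ∈ Finset.range (Q.natDegree + 1),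
        Q.coeff k * (exp (-(δ + k * s) * ‖ξ‖ ^ 2) * cos ⟪x, ξ⟫) := by
    rw [Polynomial.aeval_eq_sum_range, Finset.mul_sum, Finset.sum_mul]
    refine Finset.sum_congr rfl fun k _ ↦ ?_
    have hexp : exp (-(δ + k * s) * ‖ξ‖ ^ 2) =
        exp (-δ * ‖ξ‖ ^ 2) * exp (-(s * ‖ξ‖ ^ 2)) ^ k := by
      rw [← exp_nat_mul, ← exp_add]
      ring_nf
    rw [hexp, NNReal.smul_def, smul_eq_mul]
    ring
  have hδk (k : ℕ) : 0 < δ + k * s := by positivity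
  simp only [cosTransform, hsum]
  rw [integral_finsetSum _ fun k _ ↦
    (integrable_mul_cos_inner (integrable_exp_neg_mul_sq_norm (hδk k)) x).const_mul _]
  refine Finset.sum_nonneg fun k _ ↦ ?_
  rw [integral_const_mul]
  refine mul_nonneg (Q.coeff k).2 ?_
  have h := cosTransform_exp_neg_mul_sq_norm (hδk k) x
  rw [cosTransform] at h
  rw [h]
  have := hδk k
  positivity

lemma pow_of_hasSum {a : ℕ → NNReal} {h : ℝ → ℝ}
    (hsum : ∀ z ∈ Set.Icc (0 : ℝ) 1, HasSum (fun k ↦ a k * z ^ k) (h z))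
    {s : ℝ} (hs : 0 ≤ s) (n : ℕ) :
    IsFourierNonneg fun ξ : V ↦ h (exp (-(s * ‖ξ‖ ^ 2))) ^ n := by
  let partialSum (N : ℕ) : Polynomial NNReal :=
    ∑ k ∈ Finset.range N, Polynomial.C (a k) * Polynomial.X ^ k
  have heval (N : ℕ) (z : ℝ) :
      (partialSum N ^ n).aeval z = (∑ k ∈ Finset.range N, a k * z ^ k) ^ n := by
    simp [partialSum]
  have hmem (ξ : V) : exp (-(s * ‖ξ‖ ^ 2)) ∈ Set.Icc (0 : ℝ) 1 :=
    ⟨(exp_pos _).le, exp_le_one_iff.2 (neg_nonpos.2 (by positivity))⟩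
  have ha : HasSum (fun k ↦ (a k : ℝ)) (h 1) := by
    simpa using hsum 1 (by simp)
  refine of_tendsto (C := h 1 ^ n) (l := atTop)
    (fun N ↦ aeval_exp_neg_mul_sq_norm (partialSum N ^ n) hs)
    (fun N ↦ Continuous.aestronglyMeasurable ?_) (fun N ξ ↦ ?_) (fun ξ ↦ ?_)
  · simp only [heval]
    fun_prop
  · have hz := hmem ξ
    have hpartial_nonneg : 0 ≤ ∑ k ∈ Finset.range N, a k * exp (-(s * ‖ξ‖ ^ 2)) ^ k := by
      positivity
    rw [heval, abs_of_nonneg (pow_nonneg hpartial_nonneg n)]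
    gcongr
    calc ∑ k ∈ Finset.range N, a k * exp (-(s * ‖ξ‖ ^ 2)) ^ k
      _ ≤ ∑ k ∈ Finset.range N, (a k : ℝ) := Finset.sum_le_sum fun k _ ↦
          mul_le_of_le_one_right (a k).2 (pow_le_one₀ hz.1 hz.2)
      _ ≤ h 1 := sum_le_hasSum _ (fun k _ ↦ (a k).2) ha
  · simp only [heval]
    exact ((hsum _ (hmem ξ)).tendsto_sum_nat).pow n

lemma exp_neg_mul_sq_norm_rpow {β c : ℝ} (h0 : 0 < β) (h1 : β ≤ 1) (hc : 0 ≤ c) :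
    IsFourierNonneg fun ξ : V ↦ exp (-(c * ‖ξ‖ ^ 2) ^ β) := by
  obtain ⟨a, hsum⟩ := exists_nonneg_hasSum_one_sub_rpow h0 h1
  let F (n : ℕ) (ξ : V) : ℝ := (1 - (1 - exp (-((n : ℝ) ^ (-β⁻¹) * c * ‖ξ‖ ^ 2))) ^ β) ^ n
  have hmem (n : ℕ) (ξ : V) :
      1 - exp (-((n : ℝ) ^ (-β⁻¹) * c * ‖ξ‖ ^ 2)) ∈ Set.Icc (0 : ℝ) 1 := by
    refine ⟨sub_nonneg.2 (exp_le_one_iff.2 (neg_nonpos.2 (by positivity))), ?_⟩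
    exact sub_le_self _ (exp_pos _).le
  refine of_tendsto (F := F) (C := 1) (l := atTop) (fun n ↦ pow_of_hasSum hsum (by positivity) n)
    (fun n ↦ Continuous.aestronglyMeasurable ?_) (fun n ξ ↦ ?_) (fun ξ ↦ ?_)
  · exact (continuous_const.sub (Continuous.rpow_const (by fun_prop) fun _ ↦ .inr h0.le)).pow n
  · obtain ⟨hw0, hw1⟩ := hmem n ξ
    have hpow0 := rpow_nonneg hw0 β
    have hpow1 := rpow_le_one hw0 hw1 h0.le
    rw [abs_of_nonneg (pow_nonneg (sub_nonneg.2 hpow1) n)]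
    exact pow_le_one₀ (sub_nonneg.2 hpow1) (sub_le_self _ hpow0)
  · simpa only [F, mul_assoc] using
      tendsto_one_sub_one_sub_exp_rpow_pow h0 (u := c * ‖ξ‖ ^ 2) (by positivity)

lemma exp_neg_mul_norm_rpow {α t : ℝ} (h0 : 0 < α) (h2 : α ≤ 2) (ht : 0 ≤ t) :
    IsFourierNonneg fun ξ : V ↦ exp (-(t * ‖ξ‖ ^ α)) := by
  have hscale (ξ : V) : t * ‖ξ‖ ^ α = (t ^ (2 / α) * ‖ξ‖ ^ 2) ^ (α / 2) := by
    rw [mul_rpow (by positivity) (by positivity), ← rpow_mul ht, ← rpow_natCast,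
      ← rpow_mul (norm_nonneg ξ), Nat.cast_ofNat, mul_div_cancel₀ α two_ne_zero,
      div_mul_div_cancel₀ h0.ne', div_self two_ne_zero, rpow_one]
  simp only [hscale]
  exact exp_neg_mul_sq_norm_rpow (by positivity) (by linarith) (by positivity)

lemma cosTransform_nonneg {f : V → ℝ} (hf : IsFourierNonneg f) (hint : Integrable f) (x : V) :
    0 ≤ cosTransform f x := by
  have hgauss (ξ : V) : Tendsto (fun δ : ℝ ↦ exp (-δ * ‖ξ‖ ^ 2)) (𝓝[>] 0) (𝓝 1) := by
    have hcont : Continuous fun δ : ℝ ↦ exp (-δ * ‖ξ‖ ^ 2) := by fun_prop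
    simpa using (hcont.tendsto 0).mono_left nhdsWithin_le_nhds
  have hlim := tendsto_cosTransform_of_dominated (l := 𝓝[>] (0 : ℝ)) (f := f)
    (F := fun δ ξ ↦ exp (-δ * ‖ξ‖ ^ 2) * f ξ) (bound := fun ξ ↦ |f ξ|)
    (.of_forall fun δ ↦
      (Continuous.aestronglyMeasurable (by fun_prop)).mul hint.aestronglyMeasurable)
    ?_ hint.abs (.of_forall fun ξ ↦ by simpa using (hgauss ξ).mul_const (f ξ)) x
  · refine ge_of_tendsto hlim ?_
    filter_upwards [self_mem_nhdsWithin] with δ hδ using hf δ hδ x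
  · filter_upwards [self_mem_nhdsWithin] with δ (hδ : 0 < δ)
    refine .of_forall fun ξ ↦ ?_
    rw [abs_mul, abs_exp]
    refine mul_le_of_le_one_left (abs_nonneg _) (exp_le_one_iff.2 ?_)
    rw [neg_mul, neg_nonpos]
    positivity

end IsFourierNonneg

section FourierInversion

open scoped FourierTransform

lemma tendsto_integral_gaussian_smul_fourier {E : Type*} [NormedAddCommGroup E] [NormedSpace ℂ E]
    [CompleteSpace E] {f : V → E} (hf : Integrable f) {v : V} (hv : ContinuousAt f v) :
    Tendsto (fun c : ℝ ↦ ∫ w : V,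
        Complex.exp (-(c : ℂ)⁻¹ * ‖w‖ ^ 2 + 2 * π * Complex.I * ⟪v, w⟫) • 𝓕 f w)
      atTop (𝓝 (f v)) := by
  refine (Real.tendsto_integral_gaussian_smul' hf hv).congr' ?_
  filter_upwards [Ioi_mem_atTop 0] with c (hc : 0 < c)
  have hc' : 0 < ((c : ℂ)⁻¹).re := by simpa
  have hgauss := GaussianFourier.integrable_cexp_neg_mul_sq_norm_add hc' (2 * π * Complex.I) v
  calc ∫ w, ((π * c : ℂ) ^ (Module.finrank ℝ V / 2 : ℂ) *
          Complex.exp (-π ^ 2 * c * ‖v - w‖ ^ 2)) • f w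
    _ = ∫ w, 𝓕 (fun u : V ↦
          Complex.exp (-(c : ℂ)⁻¹ * ‖u‖ ^ 2 + 2 * π * Complex.I * ⟪v, u⟫)) w • f w := by
        congr with w
        rw [fourier_gaussian_innerProductSpace' hc', div_inv_eq_mul, div_inv_eq_mul]
        ring_nf
    _ = ∫ w, Complex.exp (-(c : ℂ)⁻¹ * ‖w‖ ^ 2 + 2 * π * Complex.I * ⟪v, w⟫) • 𝓕 f w := by
        simpa using! VectorFourier.integral_fourierIntegral_smul_eq_flip (L := innerₗ V)
          Real.continuous_fourierChar continuous_inner hgauss hf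

lemma integrable_fourier_of_nonneg {f : V → ℂ} (hf : Integrable f) (h0 : ContinuousAt f 0)
    {g : V → ℝ} (hg : ∀ w, 0 ≤ g w) (hfg : ∀ w, 𝓕 f w = g w) : Integrable g := by
  have hcont : Continuous g := by
    have h𝓕 : Continuous (𝓕 f) :=
      VectorFourier.fourierIntegral_continuous Real.continuous_fourierChar continuous_inner hf
    simpa [funext hfg, Function.comp_def] using Complex.continuous_re.comp h𝓕
  have hbound (w : V) : ‖g w‖ ≤ ∫ v, ‖f v‖ := by
    rw [← Complex.norm_real, ← hfg]
    exact VectorFourier.norm_fourierIntegral_le_integral_norm 𝐞 volume (innerₗ V) f w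
  let F (n : ℕ) (w : V) : ℝ := exp (-(n + 1 : ℝ)⁻¹ * ‖w‖ ^ 2) * g w
  have hF (n : ℕ) : Integrable (F n) :=
    (integrable_exp_neg_mul_sq_norm (by positivity)).mul_bdd hcont.aestronglyMeasurable
      (.of_forall hbound)
  have hlim (w : V) : Tendsto (F · w) atTop (𝓝 (g w)) := by
    have hinv : Tendsto (fun n : ℕ ↦ (n + 1 : ℝ)⁻¹) atTop (𝓝 0) := by
      simpa using tendsto_one_div_add_atTop_nhds_zero_nat (𝕜 := ℝ)
    simpa [F] using ((hinv.neg.mul_const (‖w‖ ^ 2)).rexp).mul_const (g w)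
  have hint : Tendsto (fun n : ℕ ↦ ∫ w, F n w) atTop (𝓝 (f 0).re) := by
    have hnat : Tendsto (fun n : ℕ ↦ (n + 1 : ℝ)) atTop atTop :=
      tendsto_atTop_add_const_right _ _ tendsto_natCast_atTop_atTop
    have h := (Complex.continuous_re.tendsto _).comp
      ((tendsto_integral_gaussian_smul_fourier hf h0).comp hnat)
    refine h.congr fun n ↦ ?_
    rw [← Complex.ofReal_re (∫ w, F n w), ← integral_complex_ofReal]
    simp [F, hfg]
  exact integrable_of_tendsto_integral hF
    (fun n ↦ .of_forall fun w ↦ mul_nonneg (exp_pos _).le (hg w)) (.of_forall hlim) hint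

lemma integral_mul_sin_inner_of_even {f : V → ℝ} (heven : f.Even) (x : V) :
    ∫ ξ, f ξ * sin ⟪x, ξ⟫ = 0 := by
  have h := integral_neg_eq_self (fun ξ ↦ f ξ * sin ⟪x, ξ⟫) volume
  simp only [heven _, inner_neg_right, sin_neg, mul_neg, integral_neg] at h
  linarith

lemma fourier_ofReal_eq_cosTransform {f : V → ℝ} (hf : Integrable f) (heven : f.Even) (w : V) :
    𝓕 (fun ξ ↦ (f ξ : ℂ)) w = cosTransform f ((2 * π) • w) := by
  have heuler (ξ : V) : Complex.exp (((-2 * π * ⟪ξ, w⟫ : ℝ) : ℂ) * Complex.I) • (f ξ : ℂ) =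
      ((f ξ * cos ⟪(2 * π) • w, ξ⟫ : ℝ) : ℂ) -
        ((f ξ * sin ⟪(2 * π) • w, ξ⟫ : ℝ) : ℂ) * Complex.I := by
    have hphase : -2 * π * ⟪ξ, w⟫ = -⟪(2 * π) • w, ξ⟫ := by
      rw [real_inner_smul_left, real_inner_comm]
      ring
    rw [hphase, Complex.exp_mul_I, ← Complex.ofReal_cos, ← Complex.ofReal_sin, cos_neg, sin_neg,
      smul_eq_mul]
    push_cast
    ring
  have hsin : Integrable fun ξ ↦ f ξ * sin ⟪(2 * π) • w, ξ⟫ :=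
    hf.mul_bdd (c := 1) (Continuous.aestronglyMeasurable (by fun_prop))
      (.of_forall fun ξ ↦ abs_sin_le_one _)
  rw [Real.fourier_eq']
  simp only [heuler]
  rw [integral_sub (integrable_mul_cos_inner hf _).ofReal (hsin.ofReal.mul_const _),
    integral_mul_const, integral_complex_ofReal, integral_complex_ofReal,
    integral_mul_sin_inner_of_even heven, Complex.ofReal_zero, zero_mul, sub_zero, cosTransform]

lemma integrable_cosTransform {f : V → ℝ} (hf : Integrable f) (h0 : ContinuousAt f 0)
    (heven : f.Even) (hnonneg : ∀ x, 0 ≤ cosTransform f x) : Integrable (cosTransform f) := by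
  have h0' : ContinuousAt (fun ξ ↦ (f ξ : ℂ)) 0 := Complex.continuous_ofReal.continuousAt.comp h0
  have h := integrable_fourier_of_nonneg hf.ofReal h0' (fun w ↦ hnonneg ((2 * π) • w))
    (fourier_ofReal_eq_cosTransform hf heven)
  exact (integrable_comp_smul_iff volume (cosTransform f) two_pi_pos.ne').1 h

lemma integral_cosTransform_mul_exp_inner {f : V → ℝ} (hf : Integrable f) (hcont : Continuous f)
    (heven : f.Even) (hint : Integrable (cosTransform f)) (ξ : V) :
    ∫ x, (cosTransform f x : ℂ) * Complex.exp (Complex.I * (⟪x, ξ⟫ : ℝ)) =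
      (2 * π) ^ Module.finrank ℝ V * f ξ := by
  let G (x : V) : ℂ := cosTransform f x * Complex.exp (Complex.I * (⟪x, ξ⟫ : ℝ))
  have h𝓕 : 𝓕 (fun ξ ↦ (f ξ : ℂ)) = fun w ↦ (cosTransform f ((2 * π) • w) : ℂ) :=
    funext (fourier_ofReal_eq_cosTransform hf heven)
  have h𝓕int : Integrable (𝓕 fun ξ ↦ (f ξ : ℂ)) := by
    rw [h𝓕]
    exact (hint.comp_smul two_pi_pos.ne').ofReal
  have hG (w : V) : Complex.exp ((2 * π * ⟪w, ξ⟫ : ℝ) * Complex.I) • 𝓕 (fun ξ ↦ (f ξ : ℂ)) w =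
      G ((2 * π) • w) := by
    rw [fourier_ofReal_eq_cosTransform hf heven, smul_eq_mul, mul_comm, mul_comm _ Complex.I,
      ← real_inner_smul_left]
  have hinv : ∫ w, G ((2 * π) • w) = f ξ := by
    simp only [← hG, ← Real.fourierInv_eq']
    exact congrFun
      ((Complex.continuous_ofReal.comp hcont).fourierInv_fourier_eq hf.ofReal h𝓕int) ξ
  have hscale := Measure.integral_comp_smul volume G (2 * π)
  rw [hinv, abs_of_pos (by positivity), eq_inv_smul_iff₀ (by positivity)] at hscale
  simpa using hscale.symm

end FourierInversion

lemma integrable_exp_neg_mul_norm_rpow {α t : ℝ} (hα : 0 < α) (ht : 0 < t) :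
    Integrable fun ξ : V ↦ exp (-(t * ‖ξ‖ ^ α)) := by
  rcases subsingleton_or_nontrivial V with _ | _
  · exact continuous_of_discreteTopology.integrable_of_hasCompactSupport (.of_compactSpace _)
  · refine (integrable_fun_norm_addHaar volume (f := fun r ↦ exp (-(t * r ^ α)))).2 ?_
    have hdim : (-1 : ℝ) < (Module.finrank ℝ V - 1 : ℕ) := by
      linarith [(Module.finrank ℝ V - 1).cast_nonneg (α := ℝ)]
    simpa using integrableOn_rpow_mul_exp_neg_mul_rpow hdim hα ht

/-- The `α`-stable heat kernel `p_t` on the Euclidean space `V`, normalised so that its Fourier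
transform in the convention `∫ p_t x * exp (I * ⟪x, ξ⟫)` is the stable symbol. -/
noncomputable def stableKernel (α t : ℝ) (x : V) : ℝ :=
  (2 * π) ^ (-(Module.finrank ℝ V : ℝ)) * cosTransform (fun ξ ↦ exp (-(t * ‖ξ‖ ^ α))) x

theorem stmt_3_general {α t : ℝ} (hα0 : 0 < α) (hα2 : α ≤ 2) (ht : 0 < t) :
    Integrable (stableKernel α t : V → ℝ) ∧
      ∀ ξ : V, ∫ x : V, (stableKernel α t x : ℂ) * Complex.exp (Complex.I * (⟪x, ξ⟫ : ℝ)) =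
        (exp (-(t * ‖ξ‖ ^ α)) : ℝ) := by
  have hf : Integrable fun ξ : V ↦ exp (-(t * ‖ξ‖ ^ α)) := integrable_exp_neg_mul_norm_rpow hα0 ht
  have hcont : Continuous fun ξ : V ↦ exp (-(t * ‖ξ‖ ^ α)) :=
    continuous_exp.comp
      (continuous_const.mul (continuous_norm.rpow_const fun _ ↦ .inr hα0.le)).neg
  have heven : (fun ξ : V ↦ exp (-(t * ‖ξ‖ ^ α))).Even := fun ξ ↦ by simp only [norm_neg]
  have hint : Integrable (cosTransform fun ξ : V ↦ exp (-(t * ‖ξ‖ ^ α))) :=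
    integrable_cosTransform hf hcont.continuousAt heven
      ((IsFourierNonneg.exp_neg_mul_norm_rpow hα0 hα2 ht.le).cosTransform_nonneg hf)
  refine ⟨hint.const_mul _, fun ξ ↦ ?_⟩
  simp only [stableKernel, Complex.ofReal_mul, mul_assoc]
  rw [integral_const_mul, integral_cosTransform_mul_exp_inner hf hcont heven hint,
    rpow_neg two_pi_pos.le, rpow_natCast]
  push_cast
  rw [inv_mul_cancel_left₀ (by simp [pi_ne_zero])]

/-- For every `t > 0` the kernel `p_t` is integrable on `ℝ^d` and
`∫_{ℝ^d} p_t(x) e^{i⟨x,ξ⟩} dx = e^{−t|ξ|^α}` for every `ξ`, where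
`p_t(x) = (2π)^{−d} ∫ e^{−t|ξ|^α} cos⟨x,ξ⟩ dξ`. -/
theorem stmt_3 (d : ℕ) (hd : 1 ≤ d) (α : ℝ) (hα0 : 0 < α) (hα2 : α < 2)
    (p : ℝ → EuclideanSpace ℝ (Fin d) → ℝ)
    (hp : ∀ t : ℝ, 0 < t → ∀ x : EuclideanSpace ℝ (Fin d),
      p t x = (2 * Real.pi) ^ (-(d : ℝ)) *
        ∫ ξ : EuclideanSpace ℝ (Fin d), Real.exp (-(t * ‖ξ‖ ^ α)) * Real.cos ⟪x, ξ⟫) :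
    ∀ t : ℝ, 0 < t →
      Integrable (p t) ∧
      ∀ ξ : EuclideanSpace ℝ (Fin d),
        ∫ x : EuclideanSpace ℝ (Fin d),
            (p t x : ℂ) * Complex.exp (Complex.I * ((⟪x, ξ⟫ : ℝ) : ℂ))
          = ((Real.exp (-(t * ‖ξ‖ ^ α)) : ℝ) : ℂ) := by
  intro t ht
  have hpt : p t = stableKernel α t := funext fun x ↦ by
    rw [hp t ht, stableKernel, finrank_euclideanSpace_fin, cosTransform]
  simpa only [hpt] using stmt_3_general hα0 hα2.le ht
end

section
/- There is a constant c = c(d, α) ∈ (0, ∞) such that for all t > 0 and all x ∈ ℝ^d \ {0}, c^{−1} · min(t |x|^{−d−α}, t^{−d/α}) ≤ p_t(x) ≤ c · min(t |x|^{−d−α}, t^{−d/α}). In particular p_t(x) > 0 everywhere. -/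
open MeasureTheory Real Filter
open scoped RealInnerProductSpace Topology

/-!
The kernel `p_t` is a mixture of Gaussian heat kernels, the mixing measure being a positive
`α / 2`-stable law. That law is obtained as a limit of laws of normalised sums of independent
Pareto variables, in the compact space of probability measures on `[0, 1]` after the substitution
`z = exp (-s)`.

Only the Laplace transform `l ↦ exp (-l ^ (α / 2))` of the mixing law is needed: at distance `r`,
the Gaussian kernel at time `s` lies between multiples of `r ^ (-d)` times two combinations of the
exponentials `exp (-l * s)` with `l` comparable to `r ^ (-2)`, and averaging both in `s` gives
`r ^ (-d - α)` up to constants for large `r`. Scaling and monotonicity in `r` do the rest.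
-/

/-- `φ` agrees on `(0, ∞)` with the moments `l ↦ ∫ z ^ l` of a probability measure on `[0, 1]`.
Under `z = exp (-s)` this says that `φ` is the Laplace transform of a probability measure on the
compact half-line `[0, ∞]`, so that no tightness is needed to pass to limits. -/
def IsMomentFunction (φ : ℝ → ℝ) : Prop :=
  ∃ ν : ProbabilityMeasure unitInterval, ∀ l, 0 < l → ∫ z : unitInterval, (z : ℝ) ^ l ∂ν = φ l

lemma isMomentFunction_integral_exp_neg_mul {Ω : Type*} [MeasurableSpace Ω] (P : Measure Ω)
    [IsProbabilityMeasure P] {X : Ω → ℝ} (hX : Measurable X) (hX0 : ∀ ω, 0 ≤ X ω) :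
    IsMomentFunction fun l ↦ ∫ ω, exp (-(l * X ω)) ∂P := by
  let Z : Ω → unitInterval := fun ω ↦ ⟨exp (-X ω), (exp_pos _).le, exp_le_one_iff.2 (by
    linarith [hX0 ω])⟩
  have hZ : Measurable Z := Measurable.subtype_mk (by fun_prop)
  refine ⟨⟨P.map Z, Measure.isProbabilityMeasure_map hZ.aemeasurable⟩, fun l _ ↦ ?_⟩
  rw [ProbabilityMeasure.coe_mk, integral_map hZ.aemeasurable
    (Measurable.aestronglyMeasurable (by fun_prop))]
  refine integral_congr_ae (.of_forall fun ω ↦ ?_)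
  simp only [Z, ← exp_mul, neg_mul, mul_comm l]

namespace IsMomentFunction

variable {φ : ℝ → ℝ}

lemma pow (hφ : IsMomentFunction φ) (n : ℕ) : IsMomentFunction fun l ↦ φ l ^ n := by
  obtain ⟨ν, hν⟩ := hφ
  let prod : (Fin n → unitInterval) → unitInterval := fun ω ↦ ∏ i, ω i
  have hprod : Measurable prod := by fun_prop
  refine ⟨⟨(Measure.pi fun _ ↦ (ν : Measure _)).map prod,
    Measure.isProbabilityMeasure_map hprod.aemeasurable⟩, fun l hl ↦ ?_⟩
  rw [ProbabilityMeasure.coe_mk, integral_map hprod.aemeasurable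
    (Measurable.aestronglyMeasurable (by fun_prop))]
  have hpow := integral_fintype_prod_eq_pow (ι := Fin n) (μ := (ν : Measure unitInterval))
    fun z : unitInterval ↦ (z : ℝ) ^ l
  rw [Fintype.card_fin, hν l hl] at hpow
  beta_reduce
  rw [← hpow]
  refine integral_congr_ae (.of_forall fun ω ↦ ?_)
  have hcoe : (prod ω : ℝ) = ∏ i, (ω i : ℝ) := map_prod unitInterval.submonoid.subtype ω _
  simp only [hcoe, Real.finsetProd_rpow _ _ fun i _ ↦ (ω i).2.1]

lemma of_tendsto {φs : ℕ → ℝ → ℝ} (hφs : ∀ n, IsMomentFunction (φs n))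
    (hlim : ∀ l, 0 < l → Tendsto (fun n ↦ φs n l) atTop (𝓝 (φ l))) : IsMomentFunction φ := by
  choose νs hνs using hφs
  obtain ⟨ν, k, hk, hν⟩ := SeqCompactSpace.tendsto_subseq νs
  refine ⟨ν, fun l hl ↦ ?_⟩
  let f : C(unitInterval, ℝ) := ⟨fun z ↦ (z : ℝ) ^ l,
    continuous_subtype_val.rpow_const fun _ ↦ .inr hl.le⟩
  have hmoment := ProbabilityMeasure.tendsto_iff_forall_integral_tendsto.1 hν
    (BoundedContinuousFunction.mkOfCompact f)
  refine tendsto_nhds_unique hmoment (((hlim l hl).comp hk.tendsto_atTop).congr fun n ↦ ?_)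
  exact (hνs (k n) l hl).symm

end IsMomentFunction

section MomentMeasure

variable {ν : Measure unitInterval} [IsProbabilityMeasure ν] {l : ℝ}

lemma integrable_unitInterval_rpow (hl : 0 < l) :
    Integrable (fun z : unitInterval ↦ (z : ℝ) ^ l) ν := by
  refine .of_bound (Measurable.aestronglyMeasurable (by fun_prop)) 1 (.of_forall fun z ↦ ?_)
  rw [Real.norm_of_nonneg (rpow_nonneg z.2.1 l)]
  exact rpow_le_one z.2.1 z.2.2 hl.le

lemma measureReal_singleton_zero_le_one_sub_integral_rpow (hl : 0 < l) :
    ν.real {0} ≤ 1 - ∫ z : unitInterval, (z : ℝ) ^ l ∂ν := by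
  have hint := integrable_unitInterval_rpow (ν := ν) hl
  have hone : ∫ _ : unitInterval, (1 : ℝ) ∂ν = 1 := by simp
  have hmarkov := mul_meas_ge_le_integral_of_nonneg (μ := ν)
    (f := fun z : unitInterval ↦ 1 - (z : ℝ) ^ l)
    (.of_forall fun z ↦ sub_nonneg.2 (rpow_le_one z.2.1 z.2.2 hl.le))
    ((integrable_const 1).sub hint) 1
  rw [integral_sub (integrable_const 1) hint, hone, one_mul] at hmarkov
  exact (measureReal_mono (by simp [Set.subset_def, zero_rpow hl.ne'])).trans hmarkov

lemma measureReal_singleton_one_le_integral_rpow (hl : 0 < l) :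
    ν.real {1} ≤ ∫ z : unitInterval, (z : ℝ) ^ l ∂ν := by
  have hmarkov := mul_meas_ge_le_integral_of_nonneg
    (.of_forall fun z : unitInterval ↦ rpow_nonneg z.2.1 l)
    (integrable_unitInterval_rpow (ν := ν) hl) 1
  rw [one_mul] at hmarkov
  exact (measureReal_mono (by simp [Set.subset_def])).trans hmarkov

end MomentMeasure

/-- The function `w ↦ 1 - exp (-w ^ (-1 / β))` on `(0, ∞)`. If `U` is uniform on `(0, 1]`, the
Pareto variable `U ^ (-1 / β)` is in the domain of attraction of the positive `β`-stable law, and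
the integral of `paretoDefect β` is the resulting normalising constant. -/
noncomputable def paretoDefect (β w : ℝ) : ℝ := 1 - exp (-(w ^ (-(1 / β))))

section StableLaplace

variable {β : ℝ}

lemma paretoDefect_pos {w : ℝ} (hw : 0 < w) : 0 < paretoDefect β w :=
  sub_pos.2 (exp_lt_one_iff.2 (neg_lt_zero.2 (rpow_pos_of_pos hw _)))

lemma measurable_paretoDefect : Measurable (paretoDefect β) := by
  unfold paretoDefect
  fun_prop

lemma paretoDefect_nonneg {w : ℝ} (hw : 0 ≤ w) : 0 ≤ paretoDefect β w :=
  sub_nonneg.2 (exp_le_one_iff.2 (neg_nonpos.2 (rpow_nonneg hw _)))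

lemma norm_paretoDefect_le_one {w : ℝ} (hw : 0 ≤ w) : ‖paretoDefect β w‖ ≤ 1 := by
  rw [Real.norm_of_nonneg (paretoDefect_nonneg hw)]
  exact sub_le_self 1 (exp_pos _).le

lemma norm_paretoDefect_le_rpow {w : ℝ} (hw : 0 ≤ w) : ‖paretoDefect β w‖ ≤ w ^ (-(1 / β)) := by
  rw [Real.norm_of_nonneg (paretoDefect_nonneg hw), paretoDefect]
  linarith [one_sub_le_exp_neg (w ^ (-(1 / β)))]

lemma integrableOn_paretoDefect (hβ0 : 0 < β) (hβ1 : β < 1) :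
    IntegrableOn (paretoDefect β) (Set.Ioi 0) := by
  have hmeas {s : Set ℝ} : AEStronglyMeasurable (paretoDefect β) (volume.restrict s) :=
    measurable_paretoDefect.aestronglyMeasurable
  rw [← Set.Ioc_union_Ioi_eq_Ioi zero_le_one]
  refine .union (.of_bound (by simp) hmeas 1 ?_)
    (Integrable.mono' (g := (· ^ (-(1 / β)))) ?_ hmeas ?_)
  · exact ae_restrict_of_forall_mem measurableSet_Ioc fun w hw ↦ norm_paretoDefect_le_one hw.1.le
  · exact integrableOn_Ioi_rpow_of_lt (neg_lt_neg ((one_lt_div hβ0).2 hβ1)) one_pos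
  · exact ae_restrict_of_forall_mem measurableSet_Ioi fun w hw ↦
      norm_paretoDefect_le_rpow (one_pos.trans hw).le

lemma integral_paretoDefect_pos (hβ0 : 0 < β) (hβ1 : β < 1) :
    0 < ∫ w in Set.Ioi 0, paretoDefect β w := by
  rw [setIntegral_pos_iff_support_of_nonneg_ae
    (ae_restrict_of_forall_mem measurableSet_Ioi fun w hw ↦ (paretoDefect_pos hw).le)
    (integrableOn_paretoDefect hβ0 hβ1)]
  have hsupport : Set.Ioi (0 : ℝ) ⊆ Function.support (paretoDefect β) ∩ Set.Ioi 0 :=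
    fun w hw ↦ ⟨(paretoDefect_pos hw).ne', hw⟩
  exact (by simp : 0 < volume (Set.Ioi (0 : ℝ))).trans_le (measure_mono hsupport)

lemma one_sub_exp_neg_mul_rpow_eq_paretoDefect (hβ : β ≠ 0) {l w : ℝ} (hl : 0 < l) (hw : 0 ≤ w) :
    1 - exp (-(l * w ^ (-(1 / β)))) = paretoDefect β (w * (l ^ β)⁻¹) := by
  have hlβ : ((l ^ β)⁻¹) ^ (-(1 / β)) = l := by
    rw [← rpow_neg hl.le, ← rpow_mul hl.le, neg_mul_neg, mul_one_div_cancel hβ, rpow_one]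
  rw [paretoDefect, mul_rpow hw (by positivity), hlβ, mul_comm l]

lemma integral_paretoDefect_comp_mul {a : ℝ} (ha : a ≠ 0) :
    ∫ u : unitInterval, paretoDefect β (u * a) = a⁻¹ * ∫ w in 0..a, paretoDefect β w := by
  rw [unitInterval.volume_def, integral_subtype_comap measurableSet_Icc
    fun u : ℝ ↦ paretoDefect β (u * a), integral_Icc_eq_integral_Ioc,
    ← intervalIntegral.integral_of_le zero_le_one,
    intervalIntegral.integral_comp_mul_right _ ha, zero_mul, one_mul, smul_eq_mul]

lemma integral_exp_neg_mul_rpow_unitInterval (hβ : β ≠ 0) {l a : ℝ} (hl : 0 < l) (ha : 0 < a) :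
    ∫ u : unitInterval, exp (-(l * ((u : ℝ) * a) ^ (-(1 / β)))) =
      1 - (a * (l ^ β)⁻¹)⁻¹ * ∫ w in 0..a * (l ^ β)⁻¹, paretoDefect β w := by
  have hdefect (u : unitInterval) : exp (-(l * ((u : ℝ) * a) ^ (-(1 / β)))) =
      1 - paretoDefect β (u * (a * (l ^ β)⁻¹)) := by
    rw [← mul_assoc, ← one_sub_exp_neg_mul_rpow_eq_paretoDefect hβ hl
      (mul_nonneg u.2.1 ha.le), sub_sub_cancel]
  have hint : Integrable fun u : unitInterval ↦ paretoDefect β (u * (a * (l ^ β)⁻¹)) := by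
    refine .of_bound (measurable_paretoDefect.comp (by fun_prop)).aestronglyMeasurable 1
      (.of_forall fun u ↦ norm_paretoDefect_le_one (mul_nonneg u.2.1 (by positivity)))
  simp_rw [hdefect]
  rw [integral_sub (integrable_const 1) hint,
    integral_paretoDefect_comp_mul (by positivity)]
  simp

lemma tendsto_integral_exp_neg_mul_rpow_pow (hβ0 : 0 < β) (hβ1 : β < 1) {l : ℝ} (hl : 0 < l) :
    Tendsto (fun n : ℕ ↦ (∫ u : unitInterval, exp (-(l *
      ((u : ℝ) * (n * ∫ w in Set.Ioi 0, paretoDefect β w)) ^ (-(1 / β))))) ^ n)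
      atTop (𝓝 (exp (-(l ^ β)))) := by
  set C := ∫ w in Set.Ioi 0, paretoDefect β w
  have hC : 0 < C := integral_paretoDefect_pos hβ0 hβ1
  have hlβ : 0 < l ^ β := rpow_pos_of_pos hl β
  have hint : Tendsto (fun n : ℕ ↦ ∫ w in 0..n * C * (l ^ β)⁻¹, paretoDefect β w) atTop (𝓝 C) :=
    intervalIntegral_tendsto_integral_Ioi 0 (integrableOn_paretoDefect hβ0 hβ1)
      ((tendsto_natCast_atTop_atTop.atTop_mul_const hC).atTop_mul_const (inv_pos.2 hlβ))
  have hdefect : Tendsto (fun n : ℕ ↦ n * ((∫ u : unitInterval, exp (-(l *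
      ((u : ℝ) * (n * C)) ^ (-(1 / β))))) - 1)) atTop (𝓝 (-(l ^ β))) := by
    have hscaled := (hint.const_mul (l ^ β / C)).neg
    rw [div_mul_cancel₀ _ hC.ne'] at hscaled
    refine hscaled.congr' ?_
    filter_upwards [eventually_gt_atTop 0] with n hn
    rw [integral_exp_neg_mul_rpow_unitInterval hβ0.ne' hl (by positivity)]
    field_simp
    ring
  simpa only [add_sub_cancel] using tendsto_one_add_pow_exp_of_tendsto hdefect

lemma isMomentFunction_exp_neg_rpow (hβ0 : 0 < β) (hβ1 : β < 1) :
    IsMomentFunction fun l ↦ exp (-(l ^ β)) := by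
  have hC := integral_paretoDefect_pos hβ0 hβ1
  refine .of_tendsto (fun n ↦ .pow (isMomentFunction_integral_exp_neg_mul volume ?_ ?_) n)
    fun l hl ↦ tendsto_integral_exp_neg_mul_rpow_pow hβ0 hβ1 hl
  · fun_prop
  · exact fun u ↦ rpow_nonneg (mul_nonneg u.2.1 (by positivity)) _

end StableLaplace

/-- `μ` is the law of the standard positive `β`-stable variable, i.e. of the `β`-stable
subordinator at time one, characterised by its Laplace transform `l ↦ exp (-l ^ β)`. -/
structure IsPositiveStableLaw (β : ℝ) (μ : Measure ℝ) : Prop where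
  isProbabilityMeasure : IsProbabilityMeasure μ
  ae_pos : ∀ᵐ s ∂μ, 0 < s
  integral_exp_neg_mul : ∀ l, 0 < l → ∫ s, exp (-(l * s)) ∂μ = exp (-(l ^ β))

lemma ae_mem_Ioo_of_integral_rpow_eq {β : ℝ} (hβ : 0 < β) {ν : Measure unitInterval}
    [IsProbabilityMeasure ν]
    (hν : ∀ l, 0 < l → ∫ z : unitInterval, (z : ℝ) ^ l ∂ν = exp (-(l ^ β))) :
    ∀ᵐ z : unitInterval ∂ν, (z : ℝ) ∈ Set.Ioo 0 1 := by
  have hzero : ν.real {0} ≤ 0 := by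
    have hlim : Tendsto (fun l : ℝ ↦ 1 - exp (-(l ^ β))) (𝓝[>] 0) (𝓝 0) := by
      have hcont : Continuous fun l : ℝ ↦ 1 - exp (-(l ^ β)) := by fun_prop (disch := positivity)
      simpa [zero_rpow hβ.ne'] using (hcont.tendsto 0).mono_left nhdsWithin_le_nhds
    refine ge_of_tendsto hlim (eventually_mem_nhdsWithin.mono fun l hl ↦ ?_)
    exact hν l hl ▸ measureReal_singleton_zero_le_one_sub_integral_rpow hl
  have hone : ν.real {1} ≤ 0 := by
    have hlim : Tendsto (fun l : ℝ ↦ exp (-(l ^ β))) atTop (𝓝 0) :=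
      tendsto_exp_neg_atTop_nhds_zero.comp (tendsto_rpow_atTop hβ)
    refine ge_of_tendsto hlim ((eventually_gt_atTop 0).mono fun l hl ↦ ?_)
    exact hν l hl ▸ measureReal_singleton_one_le_integral_rpow hl
  have hnull {z : unitInterval} (hz : ν.real {z} ≤ 0) : ∀ᵐ y ∂ν, y ≠ z :=
    measure_eq_zero_iff_ae_notMem.1 ((measureReal_eq_zero_iff).1 (hz.antisymm measureReal_nonneg))
  filter_upwards [hnull hzero, hnull hone] with z hz0 hz1
  exact ⟨unitInterval.pos_iff_ne_zero.2 hz0, unitInterval.lt_one_iff_ne_one.2 hz1⟩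

lemma exists_isPositiveStableLaw {β : ℝ} (hβ0 : 0 < β) (hβ1 : β < 1) :
    ∃ μ, IsPositiveStableLaw β μ := by
  obtain ⟨ν, hν⟩ := isMomentFunction_exp_neg_rpow hβ0 hβ1
  have hIoo := ae_mem_Ioo_of_integral_rpow_eq hβ0 hν
  have hmeas : AEMeasurable (fun z : unitInterval ↦ -log z) ν := by fun_prop
  refine ⟨(ν : Measure unitInterval).map fun z : unitInterval ↦ -log (z : ℝ),
    Measure.isProbabilityMeasure_map hmeas, ?_, fun l hl ↦ ?_⟩
  · rw [ae_map_iff hmeas measurableSet_Ioi]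
    filter_upwards [hIoo] with z hz using neg_pos.2 (log_neg hz.1 hz.2)
  · rw [integral_map hmeas (Measurable.aestronglyMeasurable (by fun_prop))]
    refine (integral_congr_ae ?_).trans (hν l hl)
    filter_upwards [hIoo] with z hz
    rw [rpow_def_of_pos hz.1, mul_neg, neg_neg, mul_comm]

/-- The heat kernel of the Laplacian at time `s` and distance `r` from the origin, in dimension
`d`. The dimension is allowed to be an arbitrary real parameter. -/
noncomputable def gaussianHeatKernel (d s r : ℝ) : ℝ :=
  (4 * π * s) ^ (-(d / 2)) * exp (-(r ^ 2 / (4 * s)))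

/-- The combination `φ l - (1 + K) φ (2 l) + K φ (4 l)`, used to bound Gaussian kernels from below
by exponentials. Its coefficients add up to zero; for `φ l = exp (-l)` its slope at `0` is negative
as soon as `1 < 2 * K`, whereas for `φ l = exp (-l ^ β)` it still grows like `l ^ β` provided
`K * 2 ^ β < 1`. Both conditions can be met because `β < 1`. -/
def laplaceTest (K : ℝ) (φ : ℝ → ℝ) (l : ℝ) : ℝ := φ l - (1 + K) * φ (2 * l) + K * φ (4 * l)

lemma exists_rpow_le_mul_exp {p b : ℝ} (hp : 0 ≤ p) (hb : 0 < b) :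
    ∃ C > 0, ∀ v, 0 ≤ v → v ^ p ≤ C * exp (b * v) := by
  obtain rfl | hp := hp.eq_or_lt
  · exact ⟨1, one_pos, fun v hv ↦ by simpa using mul_nonneg hb.le hv⟩
  refine ⟨(p / b) ^ p, by positivity, fun v hv ↦ ?_⟩
  have hv_le : v ≤ p / b * exp (b * v / p) := by
    calc v = p / b * (b * v / p) := by field_simp
      _ ≤ p / b * exp (b * v / p) := by
        gcongr
        linarith [add_one_le_exp (b * v / p)]
  calc v ^ p ≤ (p / b * exp (b * v / p)) ^ p := rpow_le_rpow hv hv_le hp.le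
    _ = (p / b) ^ p * exp (b * v) := by
      rw [mul_rpow (by positivity) (exp_pos _).le, ← exp_mul, div_mul_cancel₀ _ hp.ne']

lemma exp_neg_le_inv_one_add {x : ℝ} (hx : 0 ≤ x) : exp (-x) ≤ (1 + x)⁻¹ := by
  rw [exp_neg, add_comm]
  exact inv_anti₀ (by positivity) (add_one_le_exp x)

section GaussianHeatKernel

variable {d s r K : ℝ}

lemma gaussianHeatKernel_pos (hs : 0 < s) : 0 < gaussianHeatKernel d s r := by
  unfold gaussianHeatKernel
  positivity

lemma antitoneOn_gaussianHeatKernel (hs : 0 < s) :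
    AntitoneOn (gaussianHeatKernel d s) (Set.Ici 0) := by
  intro r hr r' _ hrr'
  have hr0 : 0 ≤ r := hr
  unfold gaussianHeatKernel
  gcongr

lemma gaussianHeatKernel_eq_rpow_mul (hs : 0 < s) (hr : 0 < r) :
    gaussianHeatKernel d s r = r ^ (-d) * gaussianHeatKernel d ((r ^ 2)⁻¹ * s) 1 := by
  have hrd : (r ^ 2) ^ (-(d / 2)) = r ^ (-d) := by
    rw [← rpow_natCast_mul hr.le]
    congr 1
    push_cast
    ring
  have htime : 4 * π * s = r ^ 2 * (4 * π * ((r ^ 2)⁻¹ * s)) := by field_simp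
  rw [gaussianHeatKernel, htime, mul_rpow (by positivity) (by positivity), hrd, mul_assoc,
    gaussianHeatKernel]
  congr 3
  field_simp

lemma exists_gaussianHeatKernel_one_le_mul_one_sub_exp_neg (hd : 0 ≤ d) :
    ∃ A > 0, ∀ u, 0 < u → gaussianHeatKernel d u 1 ≤ A * (1 - exp (-u)) := by
  obtain ⟨C, hC, hexp⟩ :=
    exists_rpow_le_mul_exp (by positivity : 0 ≤ d / 2) (b := 1 / 8) (by norm_num)
  refine ⟨(4 * π) ^ (-(d / 2)) * (C * 8), by positivity, fun u hu ↦ ?_⟩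
  have hpow : u ^ (-(d / 2)) ≤ C * exp (1 / 8 * u⁻¹) := by
    rw [rpow_neg hu.le, ← inv_rpow hu.le]
    exact hexp _ (by positivity)
  have hdefect : exp (-(1 / 8 * u⁻¹)) ≤ 8 * (1 - exp (-u)) := by
    calc exp (-(1 / 8 * u⁻¹)) ≤ (1 + 1 / 8 * u⁻¹)⁻¹ := exp_neg_le_inv_one_add (by positivity)
      _ = 8 * (u / (1 + 8 * u)) := by
        field_simp
        ring
      _ ≤ 8 * (u / (1 + u)) := by
        gcongr
        linarith
      _ = 8 * (1 - (1 + u)⁻¹) := by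
        field_simp
        ring
      _ ≤ 8 * (1 - exp (-u)) := by
        gcongr
        exact exp_neg_le_inv_one_add hu.le
  calc gaussianHeatKernel d u 1
      = (4 * π) ^ (-(d / 2)) * (u ^ (-(d / 2)) * exp (-(1 / 8 * u⁻¹ + 1 / 8 * u⁻¹))) := by
        rw [gaussianHeatKernel, mul_rpow (by positivity) hu.le, mul_assoc]
        congr 3
        field_simp
        norm_num
    _ ≤ (4 * π) ^ (-(d / 2)) *
        (C * exp (1 / 8 * u⁻¹) * exp (-(1 / 8 * u⁻¹ + 1 / 8 * u⁻¹))) := by gcongr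
    _ = (4 * π) ^ (-(d / 2)) * (C * exp (-(1 / 8 * u⁻¹))) := by
        rw [mul_assoc C, ← exp_add]
        ring_nf
    _ ≤ (4 * π) ^ (-(d / 2)) * (C * (8 * (1 - exp (-u)))) := by gcongr
    _ = (4 * π) ^ (-(d / 2)) * (C * 8) * (1 - exp (-u)) := by ring

lemma exists_gaussianHeatKernel_le_mul_one_sub_exp_neg (hd : 0 ≤ d) :
    ∃ A > 0, ∀ s r, 0 < s → 0 < r →
      gaussianHeatKernel d s r ≤ A * r ^ (-d) * (1 - exp (-((r ^ 2)⁻¹ * s))) := by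
  obtain ⟨A, hA, hle⟩ := exists_gaussianHeatKernel_one_le_mul_one_sub_exp_neg hd
  refine ⟨A, hA, fun s r hs hr ↦ ?_⟩
  rw [gaussianHeatKernel_eq_rpow_mul hs hr, mul_comm A, mul_assoc]
  gcongr
  exact hle _ (by positivity)

lemma laplaceTest_exp_neg_eq (K u : ℝ) : laplaceTest K (fun u ↦ exp (-u)) u =
    exp (-u) * (1 - exp (-u)) * (1 - K * exp (-u) * (1 + exp (-u))) := by
  have htwo : exp (-(2 * u)) = exp (-u) ^ 2 := by rw [← exp_nat_mul]; push_cast; ring_nf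
  have hfour : exp (-(4 * u)) = exp (-u) ^ 4 := by rw [← exp_nat_mul]; push_cast; ring_nf
  rw [laplaceTest, htwo, hfour]
  ring

lemma laplaceTest_exp_neg_nonpos {u : ℝ} (hK : 0 ≤ K) (hu : 0 ≤ u)
    (hKu : 1 ≤ 2 * K * exp (-u) ^ 2) : laplaceTest K (fun u ↦ exp (-u)) u ≤ 0 := by
  have hle : exp (-u) ≤ 1 := exp_le_one_iff.2 (neg_nonpos.2 hu)
  rw [laplaceTest_exp_neg_eq]
  refine mul_nonpos_of_nonneg_of_nonpos
    (mul_nonneg (exp_pos _).le (sub_nonneg.2 hle)) (sub_nonpos.2 (hKu.trans ?_))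
  calc 2 * K * exp (-u) ^ 2 = K * exp (-u) * (exp (-u) + exp (-u)) := by ring
    _ ≤ K * exp (-u) * (1 + exp (-u)) := by gcongr

lemma laplaceTest_exp_neg_le {u : ℝ} (hK : 0 ≤ K) (hu : 0 ≤ u) :
    laplaceTest K (fun u ↦ exp (-u)) u ≤ exp (-u) := by
  have hle : exp (-u) ≤ 1 := exp_le_one_iff.2 (neg_nonpos.2 hu)
  rw [laplaceTest_exp_neg_eq, mul_assoc]
  have hone_sub : 1 - exp (-u) ≤ 1 := sub_le_self 1 (exp_pos _).le
  have hfactor : 1 - K * exp (-u) * (1 + exp (-u)) ≤ 1 := sub_le_self 1 (by positivity)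
  exact mul_le_of_le_one_right (exp_pos _).le
    ((mul_le_of_le_one_right (sub_nonneg.2 hle) hfactor).trans hone_sub)

lemma exists_mul_exp_neg_le_gaussianHeatKernel_one (hd : 0 ≤ d) {δ : ℝ} (hδ : 0 < δ) :
    ∃ a > 0, ∀ u, δ ≤ u → a * exp (-u) ≤ gaussianHeatKernel d u 1 := by
  obtain ⟨C, hC, hexp⟩ := exists_rpow_le_mul_exp (by positivity : 0 ≤ d / 2) one_pos
  refine ⟨(4 * π) ^ (-(d / 2)) * (C⁻¹ * exp (-(1 / (4 * δ)))), by positivity, fun u hu ↦ ?_⟩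
  have hu0 : 0 < u := hδ.trans_le hu
  have hpow : C⁻¹ * exp (-u) ≤ u ^ (-(d / 2)) := by
    rw [rpow_neg hu0.le, exp_neg, ← mul_inv]
    exact inv_anti₀ (by positivity) (by simpa using hexp u hu0.le)
  calc (4 * π) ^ (-(d / 2)) * (C⁻¹ * exp (-(1 / (4 * δ)))) * exp (-u)
      = (4 * π) ^ (-(d / 2)) * (C⁻¹ * exp (-u) * exp (-(1 / (4 * δ)))) := by ring
    _ ≤ (4 * π) ^ (-(d / 2)) * (u ^ (-(d / 2)) * exp (-(1 / (4 * u)))) := by gcongr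
    _ = gaussianHeatKernel d u 1 := by
      rw [gaussianHeatKernel, mul_rpow (by positivity) hu0.le, mul_assoc, one_pow]

lemma exists_mul_laplaceTest_le_gaussianHeatKernel_one (hd : 0 ≤ d) (hK : 1 < 2 * K) :
    ∃ a > 0, ∀ u, 0 < u →
      a * laplaceTest K (fun u ↦ exp (-u)) u ≤ gaussianHeatKernel d u 1 := by
  have hK0 : 0 < K := by linarith
  obtain ⟨a, ha, hle⟩ := exists_mul_exp_neg_le_gaussianHeatKernel_one hd
    (half_pos (log_pos hK))
  refine ⟨a, ha, fun u hu ↦ ?_⟩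
  obtain hKu | hKu := le_total (log (2 * K) / 2) u
  · exact (mul_le_mul_of_nonneg_left (laplaceTest_exp_neg_le hK0.le hu.le) ha.le).trans (hle u hKu)
  · refine (mul_nonpos_of_nonneg_of_nonpos ha.le (laplaceTest_exp_neg_nonpos hK0.le hu.le ?_)).trans
      (gaussianHeatKernel_pos hu).le
    rw [← exp_nat_mul, ← exp_log (by linarith : 0 < 2 * K), ← exp_add, one_le_exp_iff]
    push_cast
    linarith

lemma exists_mul_laplaceTest_le_gaussianHeatKernel (hd : 0 ≤ d) (hK : 1 < 2 * K) :
    ∃ a > 0, ∀ s r, 0 < s → 0 < r →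
      a * r ^ (-d) * laplaceTest K (fun l ↦ exp (-(l * s))) (r ^ 2)⁻¹ ≤
        gaussianHeatKernel d s r := by
  obtain ⟨a, ha, hle⟩ := exists_mul_laplaceTest_le_gaussianHeatKernel_one hd hK
  refine ⟨a, ha, fun s r hs hr ↦ ?_⟩
  have htest : laplaceTest K (fun l ↦ exp (-(l * s))) (r ^ 2)⁻¹ =
      laplaceTest K (fun u ↦ exp (-u)) ((r ^ 2)⁻¹ * s) := by
    simp only [laplaceTest, mul_assoc]
  rw [gaussianHeatKernel_eq_rpow_mul hs hr, mul_comm a, mul_assoc, htest]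
  gcongr
  exact hle _ (by positivity)

end GaussianHeatKernel

lemma exists_eventually_mul_rpow_le_laplaceTest {β K : ℝ} (hβ : 0 < β) (hK : K * 2 ^ β < 1) :
    ∃ κ > 0, ∀ᶠ l in 𝓝[>] 0, κ * l ^ β ≤ laplaceTest K (fun l ↦ exp (-(l ^ β))) l := by
  set b : ℝ := 2 ^ β
  have hb : 1 < b := one_lt_rpow one_lt_two hβ
  have hslope : 0 < (b - 1) * (1 - K * b) := mul_pos (sub_pos.2 hb) (sub_pos.2 hK)
  let h : ℝ → ℝ := fun ε ↦ exp (-ε) - (1 + K) * exp (-(b * ε)) + K * exp (-(b ^ 2 * ε))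
  have hderiv : HasDerivAt h ((b - 1) * (1 - K * b)) 0 := by
    have hexp (c : ℝ) : HasDerivAt (fun ε : ℝ ↦ exp (-(c * ε))) (-c) 0 := by
      simpa using ((hasDerivAt_id (0 : ℝ)).const_mul c).neg.exp
    have hone := hexp 1
    simp only [one_mul] at hone
    refine ((hone.sub ((hexp b).const_mul (1 + K))).add
      ((hexp (b ^ 2)).const_mul K)).congr_deriv ?_
    ring
  have hh : ∀ᶠ ε in 𝓝[>] 0, (b - 1) * (1 - K * b) / 2 * ε ≤ h ε := by
    filter_upwards [hderiv.tendsto_slope_zero_right.eventually_const_lt (half_lt_self hslope),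
      self_mem_nhdsWithin] with ε hε hε0
    have hh0 : h 0 = 0 := by simp [h]
    rw [zero_add, hh0, sub_zero, smul_eq_mul, inv_mul_eq_div] at hε
    exact ((lt_div_iff₀ hε0).1 hε).le
  have hrpow : Tendsto (fun l : ℝ ↦ l ^ β) (𝓝[>] 0) (𝓝[>] 0) := by
    have hcont := (continuous_rpow_const hβ.le).tendsto 0
    rw [zero_rpow hβ.ne'] at hcont
    exact tendsto_nhdsWithin_iff.2 ⟨hcont.mono_left nhdsWithin_le_nhds,
      eventually_mem_nhdsWithin.mono fun l hl ↦ rpow_pos_of_pos hl β⟩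
  refine ⟨_, half_pos hslope, ?_⟩
  filter_upwards [hrpow.eventually hh, self_mem_nhdsWithin] with l hl (hl0 : 0 < l)
  have htwo : (2 * l) ^ β = b * l ^ β := mul_rpow zero_le_two hl0.le
  have hfour : (4 * l) ^ β = b ^ 2 * l ^ β := by
    rw [(by ring : 4 * l = 2 * (2 * l)), mul_rpow zero_le_two (by positivity), htwo, sq, mul_assoc]
  simpa only [laplaceTest, htwo, hfour] using hl

lemma exists_two_sided_min_bound_of_antitoneOn {f : ℝ → ℝ} (hf : AntitoneOn f (Set.Ici 0))
    {q A a : ℝ} (ha : 0 < a) (hle : ∀ r, 0 < r → f r ≤ A * r ^ q)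
    (hge : ∀ᶠ r in atTop, a * r ^ q ≤ f r) :
    ∃ c > 0, ∀ r, 0 < r → c⁻¹ * min (r ^ q) 1 ≤ f r ∧ f r ≤ c * min (r ^ q) 1 := by
  obtain ⟨R, hR⟩ := eventually_atTop.1 (hge.and (eventually_gt_atTop 0))
  obtain ⟨hRge, hR0⟩ := hR R le_rfl
  set m := min a (a * R ^ q)
  have hm : 0 < m := by positivity
  have hmc : (max m⁻¹ (max A (f 0)))⁻¹ ≤ m := inv_le_of_inv_le₀ hm (le_max_left _ _)
  refine ⟨max m⁻¹ (max A (f 0)), lt_max_of_lt_left (inv_pos.2 hm), fun r hr ↦ ⟨?_, ?_⟩⟩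
  · obtain hRr | hrR := le_total R r
    · calc (max m⁻¹ (max A (f 0)))⁻¹ * min (r ^ q) 1 ≤ a * r ^ q := by
            gcongr
            exacts [hmc.trans (min_le_left _ _), min_le_left _ _]
        _ ≤ f r := (hR r hRr).1
    · calc (max m⁻¹ (max A (f 0)))⁻¹ * min (r ^ q) 1 ≤ a * R ^ q * 1 := by
            gcongr
            exacts [hmc.trans (min_le_right _ _), min_le_right _ _]
        _ ≤ f R := by rwa [mul_one]
        _ ≤ f r := hf hr.le hR0.le hrR
  · have hf0 : f r ≤ f 0 := hf Set.self_mem_Ici hr.le hr.le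
    rw [mul_min_of_nonneg _ _ (by positivity), mul_one]
    refine le_min ((hle r hr).trans ?_) (hf0.trans ?_)
    · gcongr
      exact (le_max_left _ _).trans (le_max_right _ _)
    · exact (le_max_right _ _).trans (le_max_right _ _)

lemma inv_sq_rpow {r : ℝ} (hr : 0 ≤ r) (β : ℝ) : (r ^ 2)⁻¹ ^ β = r ^ (-(2 * β)) := by
  rw [inv_rpow (sq_nonneg r), ← rpow_natCast_mul hr, ← rpow_neg hr, Nat.cast_two]

namespace IsPositiveStableLaw

variable {β d : ℝ} {μ : Measure ℝ}

lemma integrable_exp_neg_mul (hμ : IsPositiveStableLaw β μ) {l : ℝ} (hl : 0 ≤ l) :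
    Integrable (fun s ↦ exp (-(l * s))) μ := by
  have := hμ.isProbabilityMeasure
  refine .of_bound (Measurable.aestronglyMeasurable (by fun_prop)) 1 ?_
  filter_upwards [hμ.ae_pos] with s hs
  rw [Real.norm_of_nonneg (exp_pos _).le]
  exact exp_le_one_iff.2 (neg_nonpos.2 (mul_nonneg hl hs.le))

lemma integral_exp_neg_mul_of_nonneg (hμ : IsPositiveStableLaw β μ) (hβ : β ≠ 0) {l : ℝ}
    (hl : 0 ≤ l) : ∫ s, exp (-(l * s)) ∂μ = exp (-(l ^ β)) := by
  have := hμ.isProbabilityMeasure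
  obtain rfl | hl := hl.eq_or_lt
  · simp [zero_rpow hβ]
  · exact hμ.integral_exp_neg_mul l hl

lemma integral_exp_neg_mul_rpow_two (hμ : IsPositiveStableLaw β μ) (hβ : β ≠ 0) {r : ℝ}
    (hr : 0 ≤ r) : ∫ s, exp (-(s * r ^ (2 : ℝ))) ∂μ = exp (-(r ^ (2 * β))) := by
  simp_rw [mul_comm _ (r ^ (2 : ℝ))]
  rw [hμ.integral_exp_neg_mul_of_nonneg hβ (by positivity), ← rpow_mul hr]

lemma integrable_gaussianHeatKernel (hμ : IsPositiveStableLaw β μ)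
    (hint : Integrable (fun s ↦ gaussianHeatKernel d s 0) μ) {r : ℝ} (hr : 0 ≤ r) :
    Integrable (fun s ↦ gaussianHeatKernel d s r) μ := by
  refine hint.mono' (Measurable.aestronglyMeasurable ?_) ?_
  · unfold gaussianHeatKernel
    fun_prop
  · filter_upwards [hμ.ae_pos] with s hs
    rw [Real.norm_of_nonneg (gaussianHeatKernel_pos hs).le]
    exact antitoneOn_gaussianHeatKernel hs Set.self_mem_Ici hr hr

lemma antitoneOn_integral_gaussianHeatKernel (hμ : IsPositiveStableLaw β μ)
    (hint : Integrable (fun s ↦ gaussianHeatKernel d s 0) μ) :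
    AntitoneOn (fun r ↦ ∫ s, gaussianHeatKernel d s r ∂μ) (Set.Ici 0) := by
  intro r hr r' hr' hrr'
  refine integral_mono_ae (hμ.integrable_gaussianHeatKernel hint hr')
    (hμ.integrable_gaussianHeatKernel hint hr) ?_
  filter_upwards [hμ.ae_pos] with s hs using antitoneOn_gaussianHeatKernel hs hr hr' hrr'

lemma integral_gaussianHeatKernel_pos (hμ : IsPositiveStableLaw β μ)
    (hint : Integrable (fun s ↦ gaussianHeatKernel d s 0) μ) {r : ℝ} (hr : 0 ≤ r) :
    0 < ∫ s, gaussianHeatKernel d s r ∂μ := by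
  have := hμ.isProbabilityMeasure
  have hnonneg : 0 ≤ᵐ[μ] fun s ↦ gaussianHeatKernel d s r :=
    hμ.ae_pos.mono fun s hs ↦ (gaussianHeatKernel_pos hs).le
  refine (integral_nonneg_of_ae hnonneg).lt_of_ne' fun hzero ↦ ?_
  have hae := (integral_eq_zero_iff_of_nonneg_ae hnonneg
    (hμ.integrable_gaussianHeatKernel hint hr)).1 hzero
  obtain ⟨s, hs0, hs⟩ := (hae.and hμ.ae_pos).exists
  exact (gaussianHeatKernel_pos hs).ne' hs0

lemma exists_integral_gaussianHeatKernel_le (hμ : IsPositiveStableLaw β μ) (hd : 0 ≤ d) :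
    ∃ A, ∀ r, 0 < r → ∫ s, gaussianHeatKernel d s r ∂μ ≤ A * r ^ (-d - 2 * β) := by
  have := hμ.isProbabilityMeasure
  obtain ⟨A, hA, hle⟩ := exists_gaussianHeatKernel_le_mul_one_sub_exp_neg hd
  refine ⟨A, fun r hr ↦ ?_⟩
  have hl : 0 < (r ^ 2)⁻¹ := by positivity
  have hexp := hμ.integrable_exp_neg_mul hl.le
  calc ∫ s, gaussianHeatKernel d s r ∂μ
      ≤ ∫ s, A * r ^ (-d) * (1 - exp (-((r ^ 2)⁻¹ * s))) ∂μ := by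
        refine integral_mono_of_nonneg ?_ (((integrable_const 1).sub hexp).const_mul _) ?_
        · filter_upwards [hμ.ae_pos] with s hs using (gaussianHeatKernel_pos hs).le
        · filter_upwards [hμ.ae_pos] with s hs using hle s r hs hr
    _ = A * r ^ (-d) * (1 - exp (-((r ^ 2)⁻¹ ^ β))) := by
        rw [integral_const_mul, integral_sub (integrable_const 1) hexp,
          hμ.integral_exp_neg_mul _ hl]
        simp
    _ ≤ A * r ^ (-d) * (r ^ 2)⁻¹ ^ β := by
        gcongr
        linarith [one_sub_le_exp_neg ((r ^ 2)⁻¹ ^ β)]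
    _ = A * r ^ (-d - 2 * β) := by
        rw [inv_sq_rpow hr.le, mul_assoc, ← rpow_add hr, sub_eq_add_neg]

lemma integrable_laplaceTest (hμ : IsPositiveStableLaw β μ) (K : ℝ) {l : ℝ} (hl : 0 ≤ l) :
    Integrable (fun s ↦ laplaceTest K (fun l ↦ exp (-(l * s))) l) μ :=
  ((hμ.integrable_exp_neg_mul hl).sub ((hμ.integrable_exp_neg_mul (by positivity)).const_mul _)).add
    ((hμ.integrable_exp_neg_mul (by positivity)).const_mul _)

lemma integral_laplaceTest (hμ : IsPositiveStableLaw β μ) (K : ℝ) {l : ℝ} (hl : 0 < l) :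
    ∫ s, laplaceTest K (fun l ↦ exp (-(l * s))) l ∂μ =
      laplaceTest K (fun l ↦ exp (-(l ^ β))) l := by
  have hint {l : ℝ} (hl : 0 < l) := hμ.integrable_exp_neg_mul hl.le
  have htwo : 0 < 2 * l := by positivity
  have hfour : 0 < 4 * l := by positivity
  have hsub : Integrable (fun s ↦ exp (-(l * s)) - (1 + K) * exp (-(2 * l * s))) μ :=
    (hint hl).sub ((hint htwo).const_mul _)
  simp only [laplaceTest]
  rw [integral_add hsub ((hint hfour).const_mul _),
    integral_sub (hint hl) ((hint htwo).const_mul _), integral_const_mul, integral_const_mul,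
    hμ.integral_exp_neg_mul _ hl, hμ.integral_exp_neg_mul _ htwo, hμ.integral_exp_neg_mul _ hfour]

lemma exists_eventually_le_integral_gaussianHeatKernel (hμ : IsPositiveStableLaw β μ)
    (hβ0 : 0 < β) (hβ1 : β < 1) (hd : 0 ≤ d)
    (hint : Integrable (fun s ↦ gaussianHeatKernel d s 0) μ) :
    ∃ a > 0, ∀ᶠ r in atTop, a * r ^ (-d - 2 * β) ≤ ∫ s, gaussianHeatKernel d s r ∂μ := by
  have hβ2 : (2 : ℝ) ^ β < 2 := by simpa using rpow_lt_rpow_of_exponent_lt one_lt_two hβ1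
  obtain ⟨K, hK, hKβ⟩ := exists_between (one_div_lt_one_div_of_lt (by positivity) hβ2)
  obtain ⟨a, ha, hge⟩ := exists_mul_laplaceTest_le_gaussianHeatKernel hd (K := K) (by linarith)
  obtain ⟨κ, hκ, hκge⟩ := exists_eventually_mul_rpow_le_laplaceTest hβ0
    ((lt_div_iff₀ (by positivity)).1 hKβ)
  have hinv_sq : Tendsto (fun r : ℝ ↦ (r ^ 2)⁻¹) atTop (𝓝[>] 0) :=
    tendsto_inv_atTop_nhdsGT_zero.comp (tendsto_pow_atTop two_ne_zero)
  refine ⟨a * κ, by positivity, ?_⟩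
  filter_upwards [hinv_sq.eventually hκge, eventually_gt_atTop 0] with r hr hr0
  have hl : 0 < (r ^ 2)⁻¹ := by positivity
  calc a * κ * r ^ (-d - 2 * β) = a * r ^ (-d) * (κ * (r ^ 2)⁻¹ ^ β) := by
        rw [inv_sq_rpow hr0.le, sub_eq_add_neg, rpow_add hr0]
        ring
    _ ≤ a * r ^ (-d) * laplaceTest K (fun l ↦ exp (-(l ^ β))) (r ^ 2)⁻¹ := by gcongr
    _ = ∫ s, a * r ^ (-d) * laplaceTest K (fun l ↦ exp (-(l * s))) (r ^ 2)⁻¹ ∂μ := by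
        rw [integral_const_mul, hμ.integral_laplaceTest K hl]
    _ ≤ ∫ s, gaussianHeatKernel d s r ∂μ := by
        refine integral_mono_ae ((hμ.integrable_laplaceTest K hl.le).const_mul _)
          (hμ.integrable_gaussianHeatKernel hint hr0.le) ?_
        filter_upwards [hμ.ae_pos] with s hs using hge s r hs hr0

lemma exists_integral_gaussianHeatKernel_two_sided (hμ : IsPositiveStableLaw β μ)
    (hβ0 : 0 < β) (hβ1 : β < 1) (hd : 0 ≤ d)
    (hint : Integrable (fun s ↦ gaussianHeatKernel d s 0) μ) :
    ∃ c > 0, ∀ r, 0 < r →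
      c⁻¹ * min (r ^ (-d - 2 * β)) 1 ≤ ∫ s, gaussianHeatKernel d s r ∂μ ∧
      ∫ s, gaussianHeatKernel d s r ∂μ ≤ c * min (r ^ (-d - 2 * β)) 1 := by
  obtain ⟨A, hle⟩ := hμ.exists_integral_gaussianHeatKernel_le hd
  obtain ⟨a, ha, hge⟩ := hμ.exists_eventually_le_integral_gaussianHeatKernel hβ0 hβ1 hd hint
  exact exists_two_sided_min_bound_of_antitoneOn (hμ.antitoneOn_integral_gaussianHeatKernel hint)
    ha hle hge

end IsPositiveStableLaw

lemma rpow_mul_min_mul_rpow {α : ℝ} (hα : α ≠ 0) {t r : ℝ} (ht : 0 < t) (hr : 0 ≤ r) (n : ℝ) :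
    t ^ (-n / α) * min ((t ^ (-(1 / α)) * r) ^ (-n - α)) 1 =
      min (t * r ^ (-n - α)) (t ^ (-n / α)) := by
  have hexponent : -n / α + -(1 / α) * (-n - α) = 1 := by
    field_simp
    ring
  rw [mul_min_of_nonneg _ _ (by positivity), mul_one, mul_rpow (by positivity) hr, ← mul_assoc,
    ← rpow_mul ht.le, ← rpow_add ht, hexponent, rpow_one]

section StableHeatKernel

variable {V : Type*} [NormedAddCommGroup V] [InnerProductSpace ℝ V] [FiniteDimensional ℝ V]
  [MeasurableSpace V] [BorelSpace V] {α : ℝ}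

/-- The `α`-stable heat kernel `p_t(x)` on a Euclidean space, written as the real part of the
inverse Fourier transform of `exp (-t‖ξ‖ ^ α)`. -/
noncomputable def stableHeatKernel (α t : ℝ) (x : V) : ℝ :=
  (2 * π) ^ (-(Module.finrank ℝ V : ℝ)) * ∫ ξ : V, exp (-(t * ‖ξ‖ ^ α)) * cos ⟪x, ξ⟫

lemma stableHeatKernel_eq_rpow_mul (hα : α ≠ 0) {t : ℝ} (ht : 0 < t) (x : V) :
    stableHeatKernel α t x =
      t ^ (-(Module.finrank ℝ V : ℝ) / α) * stableHeatKernel α 1 (t ^ (-(1 / α)) • x) := by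
  have hscale (ξ : V) : exp (-(1 * ‖t ^ (1 / α) • ξ‖ ^ α)) *
      cos ⟪t ^ (-(1 / α)) • x, t ^ (1 / α) • ξ⟫ = exp (-(t * ‖ξ‖ ^ α)) * cos ⟪x, ξ⟫ := by
    have hnorm : ‖t ^ (1 / α) • ξ‖ ^ α = t * ‖ξ‖ ^ α := by
      rw [norm_smul, Real.norm_of_nonneg (by positivity), mul_rpow (by positivity) (norm_nonneg _),
        ← rpow_mul ht.le, one_div_mul_cancel hα, rpow_one]
    rw [hnorm, one_mul, real_inner_smul_left, real_inner_smul_right, ← mul_assoc, ← rpow_add ht,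
      neg_add_cancel, rpow_zero, one_mul]
  have hjacobian : |((t ^ (1 / α)) ^ Module.finrank ℝ V)⁻¹| =
      t ^ (-(Module.finrank ℝ V : ℝ) / α) := by
    rw [abs_of_pos (by positivity), ← rpow_mul_natCast ht.le, ← rpow_neg ht.le]
    congr 1
    ring
  have hsubst := Measure.integral_comp_smul (volume : Measure V)
    (fun ξ ↦ exp (-(1 * ‖ξ‖ ^ α)) * cos ⟪t ^ (-(1 / α)) • x, ξ⟫) (t ^ (1 / α))
  simp_rw [hscale, hjacobian, smul_eq_mul] at hsubst
  rw [stableHeatKernel, hsubst, stableHeatKernel]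
  ring

lemma integral_exp_neg_mul_norm_rpow_two_mul_cos {s : ℝ} (hs : 0 < s) (x : V) :
    ∫ ξ : V, exp (-(s * ‖ξ‖ ^ (2 : ℝ))) * cos ⟪x, ξ⟫ =
      (π / s) ^ (Module.finrank ℝ V / 2 : ℝ) * exp (-(‖x‖ ^ 2 / (4 * s))) := by
  have hs' : 0 < (s : ℂ).re := by simpa using hs
  have hre (ξ : V) : (Complex.exp (-s * ‖ξ‖ ^ 2 + Complex.I * ⟪x, ξ⟫)).re =
      exp (-(s * ‖ξ‖ ^ (2 : ℝ))) * cos ⟪x, ξ⟫ := by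
    simp [Complex.exp_re, ← Complex.ofReal_pow]
  have hgaussian : (π / s : ℂ) ^ (Module.finrank ℝ V / 2 : ℂ) *
      Complex.exp (Complex.I ^ 2 * ‖x‖ ^ 2 / (4 * s)) =
      ((π / s) ^ (Module.finrank ℝ V / 2 : ℝ) * exp (-(‖x‖ ^ 2 / (4 * s))) : ℝ) := by
    rw [Complex.ofReal_mul, Complex.ofReal_cpow (by positivity), Complex.I_sq]
    push_cast
    ring_nf
  have hfourier := GaussianFourier.integral_cexp_neg_mul_sq_norm_add hs' Complex.I x
  rw [hgaussian] at hfourier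
  simp_rw [← hre]
  exact (integral_re (GaussianFourier.integrable_cexp_neg_mul_sq_norm_add hs' Complex.I x)).trans
    (congrArg Complex.re hfourier)

lemma stableHeatKernel_two {s : ℝ} (hs : 0 < s) (x : V) :
    stableHeatKernel 2 s x = gaussianHeatKernel (Module.finrank ℝ V) s ‖x‖ := by
  rw [stableHeatKernel, integral_exp_neg_mul_norm_rpow_two_mul_cos hs, gaussianHeatKernel]
  set n : ℝ := (Module.finrank ℝ V : ℝ)
  have hnormalise : (2 * π) ^ (-n) * (π / s) ^ (n / 2) = (4 * π * s) ^ (-(n / 2)) := by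
    have htwo_pi : (2 * π) ^ (-n) = ((2 * π) ^ 2) ^ (-(n / 2)) := by
      rw [← rpow_natCast_mul (by positivity)]
      congr 1
      push_cast
      ring
    rw [htwo_pi, ← inv_div s π, inv_rpow (by positivity), ← rpow_neg (by positivity),
      ← mul_rpow (by positivity) (by positivity)]
    congr 1
    field_simp
    norm_num
  rw [← mul_assoc, hnormalise]

lemma integrable_exp_neg_norm_rpow (hα : 0 < α) : Integrable fun ξ : V ↦ exp (-(‖ξ‖ ^ α)) := by
  obtain _ | _ := subsingleton_or_nontrivial V
  · exact (continuous_of_const fun ξ η ↦ by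
      rw [Subsingleton.elim ξ η]).integrable_of_hasCompactSupport (.of_compactSpace _)
  rw [integrable_fun_norm_addHaar volume (f := fun r ↦ exp (-(r ^ α)))]
  simpa using integrableOn_rpow_mul_exp_neg_rpow (s := (Module.finrank ℝ V - 1 : ℕ))
    (neg_one_lt_zero.trans_le (Nat.cast_nonneg _)) hα

namespace IsPositiveStableLaw

variable {μ : Measure ℝ}

lemma integrable_exp_neg_mul_norm_rpow_two_mul_cos_prod (hμ : IsPositiveStableLaw (α / 2) μ)
    (hα : 0 < α) (x : V) :
    Integrable (fun z : V × ℝ ↦ exp (-(z.2 * ‖z.1‖ ^ (2 : ℝ))) * cos ⟪x, z.1⟫)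
      (volume.prod μ) := by
  have := hμ.isProbabilityMeasure
  have hexp : Integrable (fun z : V × ℝ ↦ exp (-(z.2 * ‖z.1‖ ^ (2 : ℝ)))) (volume.prod μ) := by
    refine (integrable_prod_iff (Measurable.aestronglyMeasurable (by fun_prop))).2
      ⟨.of_forall fun ξ ↦ ?_, ?_⟩
    · simpa only [mul_comm] using hμ.integrable_exp_neg_mul (l := ‖ξ‖ ^ (2 : ℝ)) (by positivity)
    · simp_rw [Real.norm_of_nonneg (exp_pos _).le,
        hμ.integral_exp_neg_mul_rpow_two (half_pos hα).ne' (norm_nonneg _),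
        mul_div_cancel₀ α two_ne_zero]
      exact integrable_exp_neg_norm_rpow hα
  exact hexp.mul_bdd (c := 1) (Continuous.aestronglyMeasurable (by fun_prop))
    (.of_forall fun z ↦ abs_cos_le_one _)

lemma integrable_gaussianHeatKernel_finrank_zero (hμ : IsPositiveStableLaw (α / 2) μ)
    (hα : 0 < α) : Integrable (fun s ↦ gaussianHeatKernel (Module.finrank ℝ V) s 0) μ := by
  have := hμ.isProbabilityMeasure
  refine ((hμ.integrable_exp_neg_mul_norm_rpow_two_mul_cos_prod hα
    (0 : V)).integral_prod_right.const_mul ((2 * π) ^ (-(Module.finrank ℝ V : ℝ)))).congr ?_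
  filter_upwards [hμ.ae_pos] with s hs
  exact (stableHeatKernel_two hs (0 : V)).trans (by rw [norm_zero])

lemma stableHeatKernel_one_eq_integral (hμ : IsPositiveStableLaw (α / 2) μ) (hα : 0 < α) (x : V) :
    stableHeatKernel α 1 x = ∫ s, gaussianHeatKernel (Module.finrank ℝ V) s ‖x‖ ∂μ := by
  have := hμ.isProbabilityMeasure
  calc stableHeatKernel α 1 x
      = (2 * π) ^ (-(Module.finrank ℝ V : ℝ)) *
          ∫ ξ : V, ∫ s, exp (-(s * ‖ξ‖ ^ (2 : ℝ))) * cos ⟪x, ξ⟫ ∂μ := by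
        simp_rw [integral_mul_const,
          hμ.integral_exp_neg_mul_rpow_two (half_pos hα).ne' (norm_nonneg _),
          mul_div_cancel₀ α two_ne_zero, stableHeatKernel, one_mul]
    _ = ∫ s, stableHeatKernel 2 s x ∂μ := by
        rw [integral_integral_swap (hμ.integrable_exp_neg_mul_norm_rpow_two_mul_cos_prod hα x),
          ← integral_const_mul]
        rfl
    _ = ∫ s, gaussianHeatKernel (Module.finrank ℝ V) s ‖x‖ ∂μ := by
        refine integral_congr_ae ?_
        filter_upwards [hμ.ae_pos] with s hs using stableHeatKernel_two hs x

end IsPositiveStableLaw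

lemma exists_stableHeatKernel_one_two_sided (hα0 : 0 < α) (hα2 : α < 2) :
    ∃ c > 0, ∀ x : V, x ≠ 0 →
      c⁻¹ * min (‖x‖ ^ (-(Module.finrank ℝ V : ℝ) - α)) 1 ≤ stableHeatKernel α 1 x ∧
      stableHeatKernel α 1 x ≤ c * min (‖x‖ ^ (-(Module.finrank ℝ V : ℝ) - α)) 1 := by
  obtain ⟨μ, hμ⟩ := exists_isPositiveStableLaw (half_pos hα0) (by linarith : α / 2 < 1)
  obtain ⟨c, hc, hbounds⟩ := hμ.exists_integral_gaussianHeatKernel_two_sided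
    (half_pos hα0) (by linarith) (Nat.cast_nonneg _)
    (hμ.integrable_gaussianHeatKernel_finrank_zero (V := V) hα0)
  refine ⟨c, hc, fun x hx ↦ ?_⟩
  rw [hμ.stableHeatKernel_one_eq_integral hα0]
  simpa only [mul_div_cancel₀ α two_ne_zero] using hbounds ‖x‖ (norm_pos_iff.2 hx)

lemma stableHeatKernel_one_pos (hα0 : 0 < α) (hα2 : α < 2) (x : V) :
    0 < stableHeatKernel α 1 x := by
  obtain ⟨μ, hμ⟩ := exists_isPositiveStableLaw (half_pos hα0) (by linarith : α / 2 < 1)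
  rw [hμ.stableHeatKernel_one_eq_integral hα0]
  exact hμ.integral_gaussianHeatKernel_pos
    (hμ.integrable_gaussianHeatKernel_finrank_zero (V := V) hα0) (norm_nonneg x)

theorem stmt_7_general (V : Type*) [NormedAddCommGroup V] [InnerProductSpace ℝ V]
    [FiniteDimensional ℝ V] [MeasurableSpace V] [BorelSpace V] {α : ℝ} (hα0 : 0 < α) (hα2 : α < 2) :
    ∃ c : ℝ, 0 < c ∧
      (∀ t : ℝ, 0 < t → ∀ x : V, x ≠ 0 →
        c⁻¹ * min (t * ‖x‖ ^ (-(Module.finrank ℝ V : ℝ) - α))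
          (t ^ (-(Module.finrank ℝ V : ℝ) / α)) ≤ stableHeatKernel α t x ∧
        stableHeatKernel α t x ≤ c * min (t * ‖x‖ ^ (-(Module.finrank ℝ V : ℝ) - α))
          (t ^ (-(Module.finrank ℝ V : ℝ) / α))) ∧
      ∀ t : ℝ, 0 < t → ∀ x : V, 0 < stableHeatKernel α t x := by
  obtain ⟨c, hc, hbounds⟩ := exists_stableHeatKernel_one_two_sided (V := V) hα0 hα2
  refine ⟨c, hc, fun t ht x hx ↦ ?_, fun t ht x ↦ ?_⟩
  · obtain ⟨hlower, hupper⟩ := hbounds (t ^ (-(1 / α)) • x)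
      (smul_ne_zero (rpow_pos_of_pos ht _).ne' hx)
    rw [norm_smul, Real.norm_of_nonneg (by positivity)] at hlower hupper
    rw [stableHeatKernel_eq_rpow_mul hα0.ne' ht,
      ← rpow_mul_min_mul_rpow hα0.ne' ht (norm_nonneg x), mul_left_comm, mul_left_comm c]
    exact ⟨by gcongr, by gcongr⟩
  · rw [stableHeatKernel_eq_rpow_mul hα0.ne' ht]
    exact mul_pos (rpow_pos_of_pos ht _) (stableHeatKernel_one_pos hα0 hα2 _)

end StableHeatKernel

/-- Sharp global bounds: there is `c = c(d,α) ∈ (0,∞)` with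
`c⁻¹ min(t|x|^{−d−α}, t^{−d/α}) ≤ p_t(x) ≤ c min(t|x|^{−d−α}, t^{−d/α})` for all `t > 0`,
`x ≠ 0`; in particular `p_t(x) > 0` everywhere. -/
theorem stmt_7 (d : ℕ) (hd : 1 ≤ d) (α : ℝ) (hα0 : 0 < α) (hα2 : α < 2)
    (p : ℝ → EuclideanSpace ℝ (Fin d) → ℝ)
    (hp : ∀ t : ℝ, 0 < t → ∀ x : EuclideanSpace ℝ (Fin d),
      p t x = (2 * Real.pi) ^ (-(d : ℝ)) *
        ∫ ξ : EuclideanSpace ℝ (Fin d), Real.exp (-(t * ‖ξ‖ ^ α)) * Real.cos ⟪x, ξ⟫) :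
    ∃ c : ℝ, 0 < c ∧
      (∀ t : ℝ, 0 < t → ∀ x : EuclideanSpace ℝ (Fin d), x ≠ 0 →
        c⁻¹ * min (t * ‖x‖ ^ (-(d : ℝ) - α)) (t ^ (-(d : ℝ) / α)) ≤ p t x ∧
        p t x ≤ c * min (t * ‖x‖ ^ (-(d : ℝ) - α)) (t ^ (-(d : ℝ) / α))) ∧
      ∀ t : ℝ, 0 < t → ∀ x : EuclideanSpace ℝ (Fin d), 0 < p t x := by
  obtain ⟨c, hc, hbounds, hpos⟩ := stmt_7_general (EuclideanSpace ℝ (Fin d)) hα0 hα2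
  have hkernel (t : ℝ) (ht : 0 < t) (x : EuclideanSpace ℝ (Fin d)) :
      p t x = stableHeatKernel α t x := by
    rw [hp t ht x, stableHeatKernel, finrank_euclideanSpace_fin]
  simp only [finrank_euclideanSpace_fin] at hbounds
  exact ⟨c, hc, fun t ht x hx ↦ hkernel t ht x ▸ hbounds t ht x hx,
    fun t ht x ↦ hkernel t ht x ▸ hpos t ht x⟩
end

section
/- There is a constant c = c(d, α) ∈ (0, ∞) such that for every x ∈ ℝ^d \ {0}, c^{−1} p_1(x) ≤ min(1, ν(x)) ≤ c p_1(x). -/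
open MeasureTheory Real Filter
open scoped RealInnerProductSpace Topology

/-!
With `β = α / 2`, the function `l ↦ exp (-l ^ β)` is the Laplace transform of a probability
measure `μ` on `(0, ∞)`, the law of the `β`-stable subordinator, which is obtained as a limit of
laws of normalized sums of independent Pareto variables. Taking `l = ‖ξ‖ ^ 2` exhibits
`exp (-‖ξ‖ ^ α)` as a `μ`-mixture of the Gaussians `exp (-s ‖ξ‖ ^ 2)`, so the heat kernel is the
`μ`-average of `s ↦ (π / s) ^ (d / 2) exp (-‖x‖ ^ 2 / (4 s))` up to a constant. The latter is at
most a multiple of `‖x‖ ^ (-d) min 1 (s / ‖x‖ ^ 2)`, and at least a multiple of `R ^ (-d / 2)` when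
`s` is comparable to `R = max 1 (‖x‖ ^ 2)`. For `S` with law `μ`, the Laplace transform gives
`𝔼[min 1 (S / R)] ≍ R ^ (-β)` for `R ≥ 1`, with the upper bound for all `R > 0`; this bounds the
average from above and shows that `S` is comparable to `R` with probability `≳ R ^ (-β)`.
-/

lemma min_one_mul_le {a b : ℝ} (hb : 0 ≤ b) : min 1 (a * b) ≤ max 1 a * min 1 b := by
  rw [mul_min_of_nonneg _ _ (zero_le_one.trans (le_max_left 1 a)), mul_one]
  gcongr
  · exact le_max_left 1 a
  · exact le_max_right 1 a

lemma min_one_le_two_mul_one_sub_exp_neg {u : ℝ} (hu : 0 ≤ u) :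
    min 1 u ≤ 2 * (1 - exp (-u)) := by
  have exp_neg_le : exp (-u) ≤ (1 + u)⁻¹ := by
    rw [exp_neg]
    exact inv_anti₀ (by positivity) (by linarith [add_one_le_exp u])
  have inv_le : (1 + u)⁻¹ ≤ 1 - min 1 u / 2 := by
    rw [inv_le_iff_one_le_mul₀ (by positivity)]
    rcases le_total 1 u with h | h
    · rw [min_eq_left h]; linarith
    · rw [min_eq_right h]; nlinarith
  linarith

lemma one_sub_exp_neg_le_min_one (u : ℝ) : 1 - exp (-u) ≤ min 1 u :=
  le_min (by linarith [exp_pos (-u)]) (by linarith [one_sub_le_exp_neg u])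

lemma rpow_mul_exp_neg_le {k v : ℝ} (hk : 0 < k) (hv : 0 ≤ v) : v ^ k * exp (-v) ≤ k ^ k := by
  have base_le_one : v / k * exp (-(v / k)) ≤ 1 :=
    (mul_exp_neg_le_exp_neg_one _).trans (exp_le_one_iff.2 (by norm_num))
  calc v ^ k * exp (-v) = k ^ k * (v / k * exp (-(v / k))) ^ k := by
        rw [mul_rpow (by positivity) (exp_pos _).le, ← exp_mul, div_rpow hv hk.le]
        field_simp
    _ ≤ k ^ k * 1 := by gcongr; exact rpow_le_one (by positivity) base_le_one hk.le
    _ = k ^ k := mul_one _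

lemma rpow_neg_mul_exp_neg_inv_le {h u : ℝ} (hh : 0 ≤ h) (hu : 0 < u) :
    u ^ (-h) * exp (-(4 * u)⁻¹) ≤ (4 * (h + 1)) ^ (h + 1) * min 1 u := by
  have one_le_const : 1 ≤ (4 * (h + 1)) ^ (h + 1) := one_le_rpow (by linarith) (by linarith)
  rcases le_total 1 u with h1 | h1
  · rw [min_eq_left h1, mul_one]
    refine le_trans (mul_le_one₀ ?_ (exp_pos _).le ?_) one_le_const
    · exact rpow_le_one_of_one_le_of_nonpos h1 (by linarith)
    · exact exp_le_one_iff.2 (neg_nonpos.2 (by positivity))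
  · rw [min_eq_right h1]
    calc u ^ (-h) * exp (-(4 * u)⁻¹)
        = 4 ^ (h + 1) * ((4 * u)⁻¹ ^ (h + 1) * exp (-(4 * u)⁻¹)) * u := by
          rw [inv_rpow (by positivity), mul_rpow (by norm_num) hu.le, rpow_neg hu.le,
            rpow_add_one hu.ne']
          field_simp
      _ ≤ 4 ^ (h + 1) * (h + 1) ^ (h + 1) * u := by
          gcongr; exact rpow_mul_exp_neg_le (by linarith) (by positivity)
      _ = (4 * (h + 1)) ^ (h + 1) * u := by rw [mul_rpow (by norm_num) (by linarith)]

/-! ### Existence of the stable subordinator -/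

lemma exists_isProbabilityMeasure_integral_eq_of_tendsto {X ι κ : Type*} [TopologicalSpace X]
    [CompactSpace X] [T2Space X] [MeasurableSpace X] [BorelSpace X] {L : Filter κ} [L.NeBot]
    (μ : κ → Measure X) [∀ n, IsProbabilityMeasure (μ n)] (f : ι → C(X, ℝ)) {φ : ι → ℝ}
    (hφ : ∀ i, Tendsto (fun n ↦ ∫ x, f i x ∂μ n) L (𝓝 (φ i))) :
    ∃ P : Measure X, IsProbabilityMeasure P ∧ ∀ i, ∫ x, f i x ∂P = φ i := by
  let law : κ → ProbabilityMeasure X := fun n ↦ ⟨μ n, inferInstance⟩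
  obtain ⟨P, -, tendsto_law⟩ := isCompact_univ.ultrafilter_le_nhds
    (Ultrafilter.map law (Ultrafilter.of L)) (by simp)
  have tendsto_integral := ProbabilityMeasure.tendsto_iff_forall_integral_tendsto.1 tendsto_law
  exact ⟨P, inferInstance, fun i ↦ tendsto_nhds_unique
    (tendsto_integral (BoundedContinuousFunction.mkOfCompact (f i)))
    ((hφ i).mono_left (Ultrafilter.of_le L))⟩

lemma ae_ne_zero_of_tendsto_integral_rpow {P : Measure unitInterval} [IsProbabilityMeasure P]
    (hP : Tendsto (fun l : ℝ ↦ ∫ u, (u : ℝ) ^ l ∂P) (𝓝[>] 0) (𝓝 1)) : ∀ᵐ u ∂P, u ≠ 0 := by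
  have moment_le : ∀ᶠ l : ℝ in 𝓝[>] 0, ∫ u, (u : ℝ) ^ l ∂P ≤ P.real {0}ᶜ := by
    filter_upwards [self_mem_nhdsWithin] with l (hl : 0 < l)
    rw [← integral_indicator_one (measurableSet_singleton 0).compl]
    refine integral_mono_of_nonneg (ae_of_all _ fun u ↦ rpow_nonneg u.2.1 l)
      ((integrable_const 1).indicator (measurableSet_singleton 0).compl) (ae_of_all _ fun u ↦ ?_)
    by_cases hu : u = 0
    · simp [hu, zero_rpow hl.ne']
    · simpa [hu] using rpow_le_one u.2.1 u.2.2 hl.le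
  have one_le : 1 ≤ P.real {0}ᶜ := le_of_tendsto hP moment_le
  have real_compl : P.real {0}ᶜ = 1 - P.real {0} :=
    probReal_compl_eq_one_sub (measurableSet_singleton 0)
  have real_zero : P.real {0} = 0 := le_antisymm (by linarith) measureReal_nonneg
  simpa [ae_iff] using (measureReal_eq_zero_iff).1 real_zero

lemma integral_rpow_map_projIcc_exp_neg {μ : Measure ℝ} (hμ : ∀ᵐ s ∂μ, 0 ≤ s) (l : ℝ) :
    ∫ u : unitInterval, (u : ℝ) ^ l ∂μ.map (fun s ↦ Set.projIcc 0 1 zero_le_one (exp (-s))) =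
      ∫ s, exp (-(l * s)) ∂μ := by
  have measurable_proj : Measurable fun s : ℝ ↦
      Set.projIcc (0 : ℝ) 1 zero_le_one (exp (-s)) :=
    (continuous_projIcc.comp (by fun_prop)).measurable
  have measurable_rpow : Measurable fun u : unitInterval ↦ (u : ℝ) ^ l := by fun_prop
  rw [integral_map measurable_proj.aemeasurable measurable_rpow.aestronglyMeasurable]
  refine integral_congr_ae ?_
  filter_upwards [hμ] with s hs
  have exp_mem : exp (-s) ∈ Set.Icc (0 : ℝ) 1 :=
    ⟨(exp_pos _).le, exp_le_one_iff.2 (neg_nonpos.2 hs)⟩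
  simp only [Set.projIcc_of_mem zero_le_one exp_mem, ← exp_mul]
  ring_nf

lemma integral_exp_neg_mul_map_neg_log {P : Measure unitInterval} (hP : ∀ᵐ u ∂P, u ≠ 0) (l : ℝ) :
    ∫ s, exp (-(l * s)) ∂P.map (fun u : unitInterval ↦ -log (u : ℝ)) = ∫ u, (u : ℝ) ^ l ∂P := by
  rw [integral_map (by fun_prop) (by fun_prop)]
  refine integral_congr_ae ?_
  filter_upwards [hP] with u hu
  rw [rpow_def_of_pos (unitInterval.pos_iff_ne_zero.2 hu)]
  ring_nf

-- The substitution `u = exp (-s)` compactifies the half-line by adding the point `u = 0`, and the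
-- limit of `φ` at `0` prevents mass from escaping there.
theorem exists_integral_exp_neg_mul_eq_of_tendsto {κ : Type*} {L : Filter κ} [L.NeBot]
    (μ : κ → Measure ℝ) [∀ n, IsProbabilityMeasure (μ n)] (hμ : ∀ n, ∀ᵐ s ∂μ n, 0 ≤ s) {φ : ℝ → ℝ}
    (hφ : ∀ l, 0 < l → Tendsto (fun n ↦ ∫ s, exp (-(l * s)) ∂μ n) L (𝓝 (φ l)))
    (hφ_zero : Tendsto φ (𝓝[>] 0) (𝓝 1)) :
    ∃ ν : Measure ℝ, IsProbabilityMeasure ν ∧ (∀ᵐ s ∂ν, 0 ≤ s) ∧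
      ∀ l, 0 < l → ∫ s, exp (-(l * s)) ∂ν = φ l := by
  let toUnit : ℝ → unitInterval := fun s ↦ Set.projIcc 0 1 zero_le_one (exp (-s))
  have measurable_toUnit : Measurable toUnit :=
    (continuous_projIcc.comp (by fun_prop)).measurable
  have (n : κ) : IsProbabilityMeasure ((μ n).map toUnit) :=
    Measure.isProbabilityMeasure_map measurable_toUnit.aemeasurable
  let power (l : Set.Ioi (0 : ℝ)) : C(unitInterval, ℝ) :=
    ⟨fun u ↦ (u : ℝ) ^ (l : ℝ), (continuous_rpow_const (le_of_lt l.2)).comp continuous_subtype_val⟩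
  obtain ⟨P, hP, moment_eq⟩ := exists_isProbabilityMeasure_integral_eq_of_tendsto
    (fun n ↦ (μ n).map toUnit) power (φ := fun l ↦ φ l) fun l ↦
      (hφ l l.2).congr fun n ↦ (integral_rpow_map_projIcc_exp_neg (hμ n) l).symm
  have ae_ne_zero : ∀ᵐ u ∂P, u ≠ 0 := ae_ne_zero_of_tendsto_integral_rpow <|
    hφ_zero.congr' <| eventually_nhdsWithin_of_forall fun l hl ↦ (moment_eq ⟨l, hl⟩).symm
  have measurable_neg_log : Measurable fun u : unitInterval ↦ -log (u : ℝ) := by fun_prop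
  refine ⟨P.map fun u : unitInterval ↦ -log (u : ℝ),
    Measure.isProbabilityMeasure_map measurable_neg_log.aemeasurable, ?_, fun l hl ↦ ?_⟩
  · rw [ae_map_iff measurable_neg_log.aemeasurable measurableSet_Ici]
    exact ae_of_all _ fun u ↦ neg_nonneg.2 (log_nonpos u.2.1 u.2.2)
  · rw [integral_exp_neg_mul_map_neg_log ae_ne_zero, ← moment_eq ⟨l, hl⟩]
    rfl

lemma integrable_exp_neg_mul_of_ae_nonneg {P : Measure ℝ} [IsFiniteMeasure P]
    (hP : ∀ᵐ s ∂P, 0 ≤ s) {l : ℝ} (hl : 0 ≤ l) : Integrable (fun s ↦ exp (-(l * s))) P := by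
  refine Integrable.of_bound (by fun_prop) 1 ?_
  filter_upwards [hP] with s hs
  rw [norm_of_nonneg (exp_pos _).le]
  exact exp_le_one_iff.2 (neg_nonpos.2 (by positivity))

lemma ae_pos_of_tendsto_integral_exp_neg_mul {μ : Measure ℝ} [IsFiniteMeasure μ]
    (hμ_nonneg : ∀ᵐ s ∂μ, 0 ≤ s)
    (hμ : Tendsto (fun l ↦ ∫ s, exp (-(l * s)) ∂μ) atTop (𝓝 0)) : ∀ᵐ s ∂μ, 0 < s := by
  have real_zero_le : ∀ᶠ l in atTop, μ.real {0} ≤ ∫ s, exp (-(l * s)) ∂μ := by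
    filter_upwards [eventually_ge_atTop 0] with l hl
    rw [← integral_indicator_one (measurableSet_singleton 0)]
    refine integral_mono ((integrable_const 1).indicator (measurableSet_singleton 0))
      (integrable_exp_neg_mul_of_ae_nonneg hμ_nonneg hl) fun s ↦ ?_
    rcases eq_or_ne s 0 with rfl | hs
    · simp
    · simpa [hs] using (exp_pos _).le
  have measure_zero : μ {0} = 0 :=
    (measureReal_eq_zero_iff).1 (le_antisymm (ge_of_tendsto hμ real_zero_le) measureReal_nonneg)
  filter_upwards [hμ_nonneg, measure_eq_zero_iff_ae_notMem.1 measure_zero] with s hs hs0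
  exact lt_of_le_of_ne hs (Ne.symm hs0)

/-- The law of the `β`-stable subordinator at time one: the measure on the positive half-line
with Laplace transform `l ↦ exp (-l ^ β)`. -/
structure IsStableSubordinatorLaw (β : ℝ) (μ : Measure ℝ) : Prop
    extends IsProbabilityMeasure μ where
  ae_pos : ∀ᵐ s ∂μ, 0 < s
  integral_exp_neg_mul : ∀ l, 0 ≤ l → ∫ s, exp (-(l * s)) ∂μ = exp (-l ^ β)

/-- The integral `∫₀^∞ (1 - e⁻ˢ) s^(-1-β) ds`, by which the Lévy measure `s^(-1-β) ds` is divided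
so that the resulting subordinator has Laplace exponent `l ↦ l ^ β`. -/
noncomputable def subordinatorConst (β : ℝ) : ℝ :=
  ∫ s in Set.Ioi 0, (1 - exp (-s)) * s ^ (-1 - β)

lemma integrableOn_one_sub_exp_neg_mul_rpow {β l : ℝ} (hβ0 : 0 < β) (hβ1 : β < 1) (hl : 0 ≤ l) :
    IntegrableOn (fun s : ℝ ↦ (1 - exp (-(l * s))) * s ^ (-1 - β)) (Set.Ioi 0) := by
  rw [← Set.Ioc_union_Ioi_eq_Ioi zero_le_one]
  have norm_eq {s : ℝ} (hs : 0 < s) :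
      ‖(1 - exp (-(l * s))) * s ^ (-1 - β)‖ = (1 - exp (-(l * s))) * s ^ (-1 - β) := by
    have : exp (-(l * s)) ≤ 1 := exp_le_one_iff.2 (neg_nonpos.2 (by positivity))
    exact norm_of_nonneg (mul_nonneg (by linarith) (by positivity))
  refine IntegrableOn.union ?near_zero ?near_infinity
  case near_zero =>
    have integrableOn_bound : IntegrableOn (fun s : ℝ ↦ l * s ^ (-β)) (Set.Ioc 0 1) := by
      rw [← intervalIntegrable_iff_integrableOn_Ioc_of_le zero_le_one]
      exact (intervalIntegral.intervalIntegrable_rpow' (by linarith)).const_mul l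
    refine Integrable.mono' integrableOn_bound (by fun_prop) ?_
    filter_upwards [ae_restrict_mem measurableSet_Ioc] with s hs
    calc _ = (1 - exp (-(l * s))) * s ^ (-1 - β) := norm_eq hs.1
      _ ≤ (l * s) * s ^ (-1 - β) := by
        have := hs.1
        gcongr
        linarith [one_sub_le_exp_neg (l * s)]
      _ = l * s ^ (-β) := by
        rw [mul_assoc, ← rpow_one_add' hs.1.le (by linarith)]
        ring_nf
  case near_infinity =>
    refine Integrable.mono' (integrableOn_Ioi_rpow_of_lt (a := -1 - β) (by linarith) one_pos)
      (by fun_prop) ?_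
    filter_upwards [ae_restrict_mem measurableSet_Ioi] with s hs
    have s_pos : 0 < s := one_pos.trans hs
    rw [norm_eq s_pos]
    exact mul_le_of_le_one_left (by positivity) (by linarith [exp_pos (-(l * s))])

lemma integral_one_sub_exp_neg_mul_rpow (β : ℝ) {l : ℝ} (hl : 0 < l) :
    ∫ s in Set.Ioi 0, (1 - exp (-(l * s))) * s ^ (-1 - β) = l ^ β * subordinatorConst β := by
  have integrand_eq : Set.EqOn (fun s : ℝ ↦ (1 - exp (-(l * s))) * s ^ (-1 - β))
      (fun s ↦ l ^ (1 + β) * ((1 - exp (-(l * s))) * (l * s) ^ (-1 - β))) (Set.Ioi 0) := by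
    intro s (hs : 0 < s)
    simp only
    rw [mul_rpow hl.le hs.le, show -1 - β = -(1 + β) by ring, rpow_neg hl.le]
    field_simp
  rw [setIntegral_congr_fun measurableSet_Ioi integrand_eq, integral_const_mul,
    integral_comp_mul_left_Ioi (fun s ↦ (1 - exp (-s)) * s ^ (-1 - β)) 0 hl, mul_zero,
    rpow_add hl, rpow_one, subordinatorConst, smul_eq_mul]
  field_simp

lemma subordinatorConst_pos {β : ℝ} (hβ0 : 0 < β) (hβ1 : β < 1) : 0 < subordinatorConst β := by
  have integrand_pos {s : ℝ} (hs : s ∈ Set.Ioi 0) : 0 < (1 - exp (-s)) * s ^ (-1 - β) :=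
    mul_pos (sub_pos.2 (exp_lt_one_iff.2 (neg_lt_zero.2 hs))) (rpow_pos_of_pos hs _)
  refine (setIntegral_pos_iff_support_of_nonneg_ae ?_ ?_).2 ?_
  · filter_upwards [ae_restrict_mem measurableSet_Ioi] with s hs using (integrand_pos hs).le
  · simpa using integrableOn_one_sub_exp_neg_mul_rpow hβ0 hβ1 zero_le_one
  · have Ioi_subset_support : Set.Ioi 0 ⊆
        Function.support fun s ↦ (1 - exp (-s)) * s ^ (-1 - β) :=
      fun s hs ↦ (integrand_pos hs).ne'
    rw [Set.inter_eq_right.2 Ioi_subset_support]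
    simp

section Pareto

open ProbabilityTheory

lemma integral_paretoMeasure {t β : ℝ} (ht : 0 < t) (hβ : 0 < β) (f : ℝ → ℝ) :
    ∫ s, f s ∂paretoMeasure t β = β * t ^ β * ∫ s in Set.Ioi t, f s * s ^ (-1 - β) := by
  have pdf_eq : paretoPDF t β = fun s ↦ ENNReal.ofReal (paretoPDFReal t β s) := rfl
  rw [paretoMeasure, pdf_eq,
    integral_withDensity_eq_integral_toReal_smul (by fun_prop) (by simp),
    ← integral_Ici_eq_integral_Ioi, ← integral_const_mul, ← integral_indicator measurableSet_Ici]
  congr with s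
  rw [ENNReal.toReal_ofReal (paretoPDFReal_nonneg ht.le hβ.le s), smul_eq_mul, paretoPDFReal,
    Set.indicator]
  simp only [Set.mem_Ici]
  split_ifs
  · ring_nf
  · simp

lemma ae_pos_paretoMeasure {t : ℝ} (ht : 0 < t) (β : ℝ) : ∀ᵐ s ∂paretoMeasure t β, 0 < s := by
  have measure_Iio : paretoMeasure t β (Set.Iio t) = 0 := by
    rw [paretoMeasure, withDensity_apply _ measurableSet_Iio]
    exact lintegral_paretoPDF_of_le le_rfl
  filter_upwards [measure_eq_zero_iff_ae_notMem.1 measure_Iio] with s hs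
  exact ht.trans_le (not_lt.1 hs)

lemma tendsto_rpow_neg_mul_one_sub_integral_paretoMeasure {β l : ℝ} (hβ0 : 0 < β) (hβ1 : β < 1)
    (hl : 0 < l) :
    Tendsto (fun t ↦ t ^ (-β) * (1 - ∫ s, exp (-(l * s)) ∂paretoMeasure t β)) (𝓝[>] 0)
      (𝓝 (β * (l ^ β * subordinatorConst β))) := by
  have aecover : AECover (volume.restrict (Set.Ioi 0)) (𝓝[>] 0) fun t : ℝ ↦ Set.Ioi t :=
    aecover_Ioi_of_Ioi (tendsto_id.mono_left nhdsWithin_le_nhds)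
  have tendsto_setIntegral := aecover.integral_tendsto_of_countably_generated
    (integrableOn_one_sub_exp_neg_mul_rpow hβ0 hβ1 hl.le)
  rw [integral_one_sub_exp_neg_mul_rpow β hl] at tendsto_setIntegral
  refine (tendsto_setIntegral.const_mul β).congr' ?_
  filter_upwards [self_mem_nhdsWithin] with t (ht : 0 < t)
  have := isProbabilityMeasure_paretoMeasure ht hβ0
  have integral_one_sub : 1 - ∫ s, exp (-(l * s)) ∂paretoMeasure t β =
      ∫ s, (1 - exp (-(l * s))) ∂paretoMeasure t β := by
    rw [integral_sub (integrable_const 1) (integrable_exp_neg_mul_of_ae_nonneg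
      ((ae_pos_paretoMeasure ht β).mono fun _ ↦ le_of_lt) hl.le)]
    simp
  rw [integral_one_sub, integral_paretoMeasure ht hβ0,
    Measure.restrict_restrict_of_subset (Set.Ioi_subset_Ioi ht.le), rpow_neg ht.le]
  field_simp

/-- The law of the sum of `n` independent random variables with law `P`. -/
noncomputable def iidSumLaw (P : Measure ℝ) (n : ℕ) : Measure ℝ :=
  (Measure.pi fun _ : Fin n ↦ P).map fun x ↦ ∑ i, x i

instance (P : Measure ℝ) [IsProbabilityMeasure P] (n : ℕ) :
    IsProbabilityMeasure (iidSumLaw P n) :=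
  Measure.isProbabilityMeasure_map (by fun_prop)

lemma integral_exp_neg_mul_iidSumLaw (P : Measure ℝ) [IsProbabilityMeasure P] (n : ℕ) (l : ℝ) :
    ∫ s, exp (-(l * s)) ∂iidSumLaw P n = (∫ s, exp (-(l * s)) ∂P) ^ n := by
  rw [iidSumLaw, integral_map (by fun_prop) (by fun_prop)]
  simp only [Finset.mul_sum, ← Finset.sum_neg_distrib, exp_sum]
  simpa using integral_fintype_prod_eq_pow (ι := Fin n) (μ := P) fun s ↦ exp (-(l * s))

lemma ae_nonneg_iidSumLaw {P : Measure ℝ} [IsProbabilityMeasure P] (hP : ∀ᵐ s ∂P, 0 ≤ s) (n : ℕ) :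
    ∀ᵐ s ∂iidSumLaw P n, 0 ≤ s := by
  rw [iidSumLaw, ae_map_iff (by fun_prop) measurableSet_Ici]
  have ae_nonneg : ∀ᵐ x ∂Measure.pi fun _ : Fin n ↦ P, ∀ i, 0 ≤ x i :=
    ae_all_iff.2 fun i ↦ Measure.tendsto_eval_ae_ae.eventually hP
  exact ae_nonneg.mono fun x hx ↦ Finset.sum_nonneg fun i _ ↦ hx i

/-- The cut-off of the Pareto law for which the sums of `n` independent copies converge to the
`β`-stable subordinator. -/
noncomputable def paretoScale (β : ℝ) (n : ℕ) : ℝ := (β * subordinatorConst β * n) ^ (-β⁻¹)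

lemma paretoScale_pos {β : ℝ} (hβ0 : 0 < β) (hβ1 : β < 1) {n : ℕ} (hn : n ≠ 0) :
    0 < paretoScale β n := by
  have := subordinatorConst_pos hβ0 hβ1
  unfold paretoScale
  positivity

lemma tendsto_paretoScale {β : ℝ} (hβ0 : 0 < β) (hβ1 : β < 1) :
    Tendsto (paretoScale β) atTop (𝓝[>] 0) := by
  have tendsto_base : Tendsto (fun n : ℕ ↦ β * subordinatorConst β * n) atTop atTop :=
    tendsto_natCast_atTop_atTop.const_mul_atTop (mul_pos hβ0 (subordinatorConst_pos hβ0 hβ1))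
  refine tendsto_nhdsWithin_iff.2
    ⟨(tendsto_rpow_neg_atTop (inv_pos.2 hβ0)).comp tendsto_base, ?_⟩
  filter_upwards [eventually_ne_atTop 0] with n hn using paretoScale_pos hβ0 hβ1 hn

lemma tendsto_integral_exp_neg_mul_iidSumLaw_paretoMeasure {β l : ℝ} (hβ0 : 0 < β) (hβ1 : β < 1)
    (hl : 0 < l) :
    Tendsto (fun n ↦ ∫ s, exp (-(l * s)) ∂iidSumLaw (paretoMeasure (paretoScale β (n + 1)) β)
      (n + 1)) atTop (𝓝 (exp (-l ^ β))) := by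
  have const_pos := subordinatorConst_pos hβ0 hβ1
  let g : ℕ → ℝ := fun n ↦ ∫ s, exp (-(l * s)) ∂paretoMeasure (paretoScale β n) β - 1
  have tendsto_mul_g : Tendsto (fun n : ℕ ↦ n * g n) atTop (𝓝 (-l ^ β)) := by
    have tendsto_scaled := ((tendsto_rpow_neg_mul_one_sub_integral_paretoMeasure hβ0 hβ1 hl).comp
      (tendsto_paretoScale hβ0 hβ1)).const_mul (-(β * subordinatorConst β)⁻¹)
    convert tendsto_scaled using 2 with n
    · have scale_rpow : paretoScale β n ^ (-β) = β * subordinatorConst β * n := by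
        rw [paretoScale, ← rpow_mul (by positivity), neg_mul_neg, inv_mul_cancel₀ hβ0.ne', rpow_one]
      simp only [Function.comp, scale_rpow, g]
      field_simp
      ring
    · field_simp
  have tendsto_pow := (tendsto_add_atTop_iff_nat 1).2
    (tendsto_one_add_pow_exp_of_tendsto tendsto_mul_g)
  refine tendsto_pow.congr fun n ↦ ?_
  have := isProbabilityMeasure_paretoMeasure (paretoScale_pos hβ0 hβ1 n.succ_ne_zero) hβ0
  rw [integral_exp_neg_mul_iidSumLaw, add_sub_cancel]

theorem exists_isStableSubordinatorLaw {β : ℝ} (hβ0 : 0 < β) (hβ1 : β < 1) :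
    ∃ μ, IsStableSubordinatorLaw β μ := by
  have prob (n : ℕ) : IsProbabilityMeasure (paretoMeasure (paretoScale β (n + 1)) β) :=
    isProbabilityMeasure_paretoMeasure (paretoScale_pos hβ0 hβ1 n.succ_ne_zero) hβ0
  have tendsto_laplace_zero : Tendsto (fun l : ℝ ↦ exp (-l ^ β)) (𝓝[>] 0) (𝓝 1) := by
    have : Continuous fun l : ℝ ↦ exp (-l ^ β) := by fun_prop (disch := positivity)
    simpa [zero_rpow hβ0.ne'] using (this.tendsto 0).mono_left nhdsWithin_le_nhds
  obtain ⟨μ, hμ, ae_nonneg, laplace⟩ := exists_integral_exp_neg_mul_eq_of_tendsto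
    (fun n ↦ iidSumLaw (paretoMeasure (paretoScale β (n + 1)) β) (n + 1))
    (fun n ↦ ae_nonneg_iidSumLaw ((ae_pos_paretoMeasure
      (paretoScale_pos hβ0 hβ1 n.succ_ne_zero) β).mono fun _ ↦ le_of_lt) (n + 1))
    (fun l hl ↦ tendsto_integral_exp_neg_mul_iidSumLaw_paretoMeasure hβ0 hβ1 hl)
    tendsto_laplace_zero
  refine ⟨μ, hμ, ?_, fun l hl ↦ ?_⟩
  · have tendsto_exp : Tendsto (fun l : ℝ ↦ exp (-l ^ β)) atTop (𝓝 0) :=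
      tendsto_exp_neg_atTop_nhds_zero.comp (tendsto_rpow_atTop hβ0)
    refine ae_pos_of_tendsto_integral_exp_neg_mul ae_nonneg (tendsto_exp.congr' ?_)
    filter_upwards [eventually_gt_atTop 0] with l hl using (laplace l hl).symm
  · rcases hl.eq_or_lt with rfl | hl
    · simp [zero_rpow hβ0.ne']
    · exact laplace l hl

end Pareto

/-! ### Truncated mean of the stable subordinator -/

/-- The truncated mean `𝔼[min 1 (S / R)]` of a random variable `S` with law `μ`. -/
noncomputable def truncatedMean (μ : Measure ℝ) (R : ℝ) : ℝ := ∫ s, min 1 (s / R) ∂μ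

lemma sub_min_one_div_le_indicator_Icc {a K u : ℝ} (ha : 0 < a) (hK : 0 < K) (hu : 0 < u) :
    min 1 u - a * min 1 (u / a) - min 1 (u / K) ≤ (Set.Icc a K).indicator 1 u := by
  have a_term_nonneg : 0 ≤ a * min 1 (u / a) := by positivity
  have K_term_nonneg : 0 ≤ min 1 (u / K) := by positivity
  by_cases hmem : u ∈ Set.Icc a K
  · rw [Set.indicator_of_mem hmem, Pi.one_apply]
    linarith [min_le_left 1 u]
  rw [Set.indicator_of_notMem hmem]
  rcases lt_or_ge u a with hua | hau
  · have a_term_eq : a * min 1 (u / a) = u := by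
      rw [min_eq_right ((div_le_one ha).2 hua.le)]
      field_simp
    linarith [min_le_right 1 u]
  · have K_term_eq : min 1 (u / K) = 1 := by
      have hKu : K < u := not_le.1 fun huK ↦ hmem ⟨hau, huK⟩
      exact min_eq_left ((one_le_div hK).2 hKu.le)
    linarith [min_le_left 1 u]

namespace IsStableSubordinatorLaw

variable {β R : ℝ} {μ : Measure ℝ}

lemma integrable_exp_neg_mul (hμ : IsStableSubordinatorLaw β μ) {l : ℝ} (hl : 0 ≤ l) :
    Integrable (fun s ↦ exp (-(l * s))) μ :=
  have := hμ.toIsProbabilityMeasure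
  integrable_exp_neg_mul_of_ae_nonneg (hμ.ae_pos.mono fun _ ↦ le_of_lt) hl

lemma integral_one_sub_exp_neg_div (hμ : IsStableSubordinatorLaw β μ) (hR : 0 < R) :
    ∫ s, (1 - exp (-(s / R))) ∂μ = 1 - exp (-R ^ (-β)) := by
  have := hμ.toIsProbabilityMeasure
  simp only [div_eq_inv_mul]
  rw [integral_sub (integrable_const 1) (hμ.integrable_exp_neg_mul (inv_nonneg.2 hR.le)),
    hμ.integral_exp_neg_mul _ (inv_nonneg.2 hR.le), inv_rpow hR.le, rpow_neg hR.le]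
  simp

lemma integrable_one_sub_exp_neg_div (hμ : IsStableSubordinatorLaw β μ) (hR : 0 < R) :
    Integrable (fun s ↦ 1 - exp (-(s / R))) μ := by
  have := hμ.toIsProbabilityMeasure
  simp only [div_eq_inv_mul]
  exact (integrable_const 1).sub (hμ.integrable_exp_neg_mul (inv_nonneg.2 hR.le))

lemma integrable_min_one_div (hμ : IsStableSubordinatorLaw β μ) (hR : 0 < R) :
    Integrable (fun s ↦ min 1 (s / R)) μ := by
  have := hμ.toIsProbabilityMeasure
  refine Integrable.of_bound (by fun_prop) 1 ?_
  filter_upwards [hμ.ae_pos] with s hs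
  rw [norm_of_nonneg (by positivity)]
  exact min_le_left _ _

lemma truncatedMean_le (hμ : IsStableSubordinatorLaw β μ) (hR : 0 < R) :
    truncatedMean μ R ≤ 2 * R ^ (-β) := by
  calc truncatedMean μ R ≤ ∫ s, 2 * (1 - exp (-(s / R))) ∂μ := by
        refine integral_mono_ae (hμ.integrable_min_one_div hR)
          ((hμ.integrable_one_sub_exp_neg_div hR).const_mul 2) ?_
        filter_upwards [hμ.ae_pos] with s hs
        exact min_one_le_two_mul_one_sub_exp_neg (by positivity)
    _ = 2 * (1 - exp (-R ^ (-β))) := by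
        rw [integral_const_mul, hμ.integral_one_sub_exp_neg_div hR]
    _ ≤ 2 * R ^ (-β) := by linarith [one_sub_le_exp_neg (R ^ (-β))]

lemma half_rpow_neg_le_truncatedMean (hμ : IsStableSubordinatorLaw β μ) (hβ : 0 ≤ β)
    (hR : 1 ≤ R) : R ^ (-β) / 2 ≤ truncatedMean μ R := by
  have R_pos : 0 < R := one_pos.trans_le hR
  have rpow_le_one : R ^ (-β) ≤ 1 := rpow_le_one_of_one_le_of_nonpos hR (neg_nonpos.2 hβ)
  have rpow_nonneg : 0 ≤ R ^ (-β) := by positivity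
  calc R ^ (-β) / 2 ≤ 1 - exp (-R ^ (-β)) := by
        linarith [min_one_le_two_mul_one_sub_exp_neg rpow_nonneg, min_eq_right rpow_le_one]
    _ = ∫ s, (1 - exp (-(s / R))) ∂μ := (hμ.integral_one_sub_exp_neg_div R_pos).symm
    _ ≤ truncatedMean μ R := integral_mono (hμ.integrable_one_sub_exp_neg_div R_pos)
        (hμ.integrable_min_one_div R_pos) fun s ↦ one_sub_exp_neg_le_min_one (s / R)

lemma truncatedMean_sub_le_real_Icc (hμ : IsStableSubordinatorLaw β μ) {a K : ℝ} (ha : 0 < a)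
    (hK : 0 < K) (hR : 0 < R) :
    truncatedMean μ R - a * truncatedMean μ (a * R) - truncatedMean μ (K * R) ≤
      μ.real (Set.Icc (a * R) (K * R)) := by
  have := hμ.toIsProbabilityMeasure
  have integrable_R := hμ.integrable_min_one_div hR
  have integrable_aR := (hμ.integrable_min_one_div (mul_pos ha hR)).const_mul a
  have integrable_KR := hμ.integrable_min_one_div (mul_pos hK hR)
  have integrable_sub : Integrable (fun s ↦ min 1 (s / R) - a * min 1 (s / (a * R))) μ :=
    integrable_R.sub integrable_aR
  rw [truncatedMean, truncatedMean, truncatedMean, ← integral_const_mul,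
    ← integral_sub integrable_R integrable_aR, ← integral_sub integrable_sub integrable_KR,
    ← integral_indicator_one measurableSet_Icc]
  refine integral_mono_ae (integrable_sub.sub integrable_KR)
    ((integrable_const 1).indicator measurableSet_Icc) ?_
  filter_upwards [hμ.ae_pos] with s hs
  have rescaled := sub_min_one_div_le_indicator_Icc ha hK (div_pos hs hR)
  simpa only [div_div, mul_comm R, Set.indicator, Set.mem_Icc, le_div_iff₀ hR, div_le_iff₀ hR,
    Pi.one_apply] using rescaled

theorem exists_rpow_neg_div_four_le_real_Icc (hμ : IsStableSubordinatorLaw β μ) (hβ0 : 0 < β)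
    (hβ1 : β < 1) : ∃ a > 0, ∃ K > 0, ∀ R, 1 ≤ R →
      R ^ (-β) / 4 ≤ μ.real (Set.Icc (a * R) (K * R)) := by
  -- With `a ^ (1 - β) = K ^ (-β) = 1 / 16`, either side of the window contributes at most a quarter
  -- of the lower bound `R ^ (-β) / 2` for the truncated mean.
  let a : ℝ := 16⁻¹ ^ (1 - β)⁻¹
  let K : ℝ := 16 ^ β⁻¹
  have a_pos : 0 < a := by positivity
  have K_pos : 0 < K := by positivity
  have a_mul_rpow : a * a ^ (-β) = 16⁻¹ := by
    rw [← rpow_one_add' a_pos.le (by linarith), ← sub_eq_add_neg,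
      rpow_inv_rpow (by positivity) (by linarith)]
  have K_rpow : K ^ (-β) = 16⁻¹ := by
    rw [rpow_neg K_pos.le, rpow_inv_rpow (by positivity) hβ0.ne']
  refine ⟨a, a_pos, K, K_pos, fun R hR ↦ ?_⟩
  have R_pos : 0 < R := one_pos.trans_le hR
  have near_zero_le : a * truncatedMean μ (a * R) ≤ R ^ (-β) / 8 := by
    calc a * truncatedMean μ (a * R) ≤ a * (2 * (a * R) ^ (-β)) := by
          gcongr
          exact hμ.truncatedMean_le (by positivity)
      _ = 2 * (a * a ^ (-β)) * R ^ (-β) := by rw [mul_rpow a_pos.le R_pos.le]; ring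
      _ = R ^ (-β) / 8 := by rw [a_mul_rpow]; ring
  have near_infinity_le : truncatedMean μ (K * R) ≤ R ^ (-β) / 8 := by
    calc truncatedMean μ (K * R) ≤ 2 * (K * R) ^ (-β) := hμ.truncatedMean_le (by positivity)
      _ = R ^ (-β) / 8 := by rw [mul_rpow K_pos.le R_pos.le, K_rpow]; ring
  linarith [hμ.truncatedMean_sub_le_real_Icc a_pos K_pos R_pos,
    hμ.half_rpow_neg_le_truncatedMean hβ0.le hR]

lemma integral_exp_neg_mul_sq {α : ℝ} (hμ : IsStableSubordinatorLaw (α / 2) μ)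
    {r : ℝ} (hr : 0 ≤ r) : ∫ s, exp (-(s * r ^ 2)) ∂μ = exp (-r ^ α) := by
  simp only [mul_comm _ (r ^ 2)]
  rw [hμ.integral_exp_neg_mul _ (sq_nonneg r), ← rpow_natCast_mul hr]
  congr 3
  push_cast
  ring

end IsStableSubordinatorLaw

/-! ### Subordination of Gaussians -/

/-- The Fourier transform `(π / s) ^ h * exp (-(r / (4 * s)))` of `ξ ↦ exp (-(s * ‖ξ‖ ^ 2))` on a
real inner product space of dimension `2 * h`, at a point whose squared norm is `r`. -/
noncomputable def gaussianFourier (h r s : ℝ) : ℝ := (π / s) ^ h * exp (-(r / (4 * s)))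

lemma gaussianFourier_nonneg (h r : ℝ) {s : ℝ} (hs : 0 < s) : 0 ≤ gaussianFourier h r s := by
  unfold gaussianFourier
  positivity

lemma gaussianFourier_le {h r s : ℝ} (hh : 0 ≤ h) (hr : 0 < r) (hs : 0 < s) :
    gaussianFourier h r s ≤ (π / r) ^ h * (4 * (h + 1)) ^ (h + 1) * min 1 (s / r) := by
  calc gaussianFourier h r s
      = (π / r) ^ h * ((s / r) ^ (-h) * exp (-(4 * (s / r))⁻¹)) := by
        rw [gaussianFourier, rpow_neg (by positivity), ← inv_rpow (by positivity), ← mul_assoc,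
          ← mul_rpow (by positivity) (by positivity)]
        field_simp
    _ ≤ (π / r) ^ h * ((4 * (h + 1)) ^ (h + 1) * min 1 (s / r)) := by
        exact mul_le_mul_of_nonneg_left (rpow_neg_mul_exp_neg_inv_le hh (div_pos hs hr))
          (by positivity)
    _ = _ := by ring

lemma le_gaussianFourier {h r R a K s : ℝ} (hh : 0 ≤ h) (ha : 0 < a) (hR : 0 < R) (hr : r ≤ R)
    (hs : s ∈ Set.Icc (a * R) (K * R)) :
    (π / (K * R)) ^ h * exp (-(4 * a)⁻¹) ≤ gaussianFourier h r s := by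
  have hs0 : 0 < s := (mul_pos ha hR).trans_le hs.1
  have exponent_le : r / (4 * s) ≤ (4 * a)⁻¹ := by
    rw [div_le_iff₀ (by positivity)]
    calc r ≤ (4 * a)⁻¹ * (4 * (a * R)) := by field_simp; exact hr
      _ ≤ (4 * a)⁻¹ * (4 * s) := by gcongr; exact hs.1
  have hKR : 0 < K * R := hs0.trans_le hs.2
  unfold gaussianFourier
  gcongr
  exact hs.2

section HeatKernel

local notation "dim" => Module.finrank ℝ

lemma integrable_exp_neg_norm_rpow_s9 {E : Type*} [NormedAddCommGroup E] [NormedSpace ℝ E]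
    [FiniteDimensional ℝ E] [MeasurableSpace E] [BorelSpace E] (μ : Measure E)
    [μ.IsAddHaarMeasure] {α : ℝ} (hα : 0 < α) : Integrable (fun ξ ↦ exp (-‖ξ‖ ^ α)) μ := by
  rcases subsingleton_or_nontrivial E with hE | hE
  · exact Integrable.of_finite
  · rw [integrable_fun_norm_addHaar μ (f := fun y ↦ exp (-y ^ α))]
    simpa only [smul_eq_mul, rpow_natCast] using
      integrableOn_rpow_mul_exp_neg_rpow (s := (dim E - 1 : ℕ))
        (by linarith [Nat.cast_nonneg (α := ℝ) (dim E - 1)]) hα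

section LevyDensity

variable {α : ℝ} {V : Type*} [NormedAddCommGroup V] [NormedSpace ℝ V]

/-- The constant `𝒜(d, α)` in the Lévy density of the isotropic `α`-stable process on a space of
dimension `d`. -/
noncomputable def stableLevyConst (d α : ℝ) : ℝ :=
  2 ^ α * Gamma ((d + α) / 2) / (π ^ (d / 2) * |Gamma (-α / 2)|)

lemma stableLevyConst_pos {d α : ℝ} (hd : 0 ≤ d) (hα0 : 0 < α) (hα2 : α < 2) :
    0 < stableLevyConst d α := by
  have Gamma_neg_half_ne_zero : Gamma (-α / 2) ≠ 0 := by
    refine Gamma_ne_zero fun m hm ↦ ?_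
    have m_pos : (0 : ℝ) < m := by linarith
    have m_lt_one : (m : ℝ) < 1 := by linarith
    norm_cast at m_pos m_lt_one
    lia
  unfold stableLevyConst
  positivity

/-- The Lévy density `y ↦ 𝒜(d, α) ‖y‖ ^ (-(d + α))` of the isotropic `α`-stable process on `V`,
where `d` is the dimension of `V`, with a junk value at the origin. -/
noncomputable def stableLevyDensity (α : ℝ) (y : V) : ℝ :=
  stableLevyConst (dim V) α * ‖y‖ ^ (-(dim V + α))

lemma min_one_norm_rpow_le (hα0 : 0 < α) (hα2 : α < 2) (x : V) :
    min 1 (‖x‖ ^ (-(dim V + α))) ≤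
      max 1 (stableLevyConst (dim V) α)⁻¹ * min 1 (stableLevyDensity α x) := by
  have const_pos := stableLevyConst_pos (d := dim V) (by positivity) hα0 hα2
  calc min 1 (‖x‖ ^ (-(dim V + α)))
      = min 1 ((stableLevyConst (dim V) α)⁻¹ * stableLevyDensity α x) := by
        rw [stableLevyDensity, inv_mul_cancel_left₀ const_pos.ne']
    _ ≤ _ := min_one_mul_le (mul_nonneg const_pos.le (by positivity))

lemma min_one_stableLevyDensity_le (α : ℝ) (x : V) :
    min 1 (stableLevyDensity α x) ≤
      max 1 (stableLevyConst (dim V) α) * min 1 (‖x‖ ^ (-(dim V + α))) :=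
  min_one_mul_le (by positivity)

end LevyDensity

variable {α : ℝ} {V : Type*} [NormedAddCommGroup V] [InnerProductSpace ℝ V] [FiniteDimensional ℝ V]
  [MeasurableSpace V] [BorelSpace V]

lemma integral_exp_neg_mul_sq_mul_cos (x : V) {s : ℝ} (hs : 0 < s) :
    ∫ ξ : V, exp (-(s * ‖ξ‖ ^ 2)) * cos ⟪x, ξ⟫ = gaussianFourier (dim V / 2) (‖x‖ ^ 2) s := by
  have hs_re : 0 < (s : ℂ).re := hs
  have integrand_eq (ξ : V) : exp (-(s * ‖ξ‖ ^ 2)) * cos ⟪x, ξ⟫ =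
      RCLike.re (Complex.exp (-s * ‖ξ‖ ^ 2 + Complex.I * ⟪x, ξ⟫)) := by
    have exponent_eq : (-s * ‖ξ‖ ^ 2 + Complex.I * ⟪x, ξ⟫ : ℂ) =
        ((-(s * ‖ξ‖ ^ 2) : ℝ) : ℂ) + (⟪x, ξ⟫ : ℝ) * Complex.I := by
      push_cast
      ring
    simp only [exponent_eq, RCLike.re_eq_complex_re, Complex.exp_re, Complex.add_re, Complex.add_im,
      Complex.ofReal_re, Complex.ofReal_im, Complex.re_ofReal_mul, Complex.im_ofReal_mul,
      Complex.I_re, Complex.I_im, mul_zero, mul_one, add_zero, zero_add]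
  have value_eq : (π / s : ℂ) ^ (dim V / 2 : ℂ) * Complex.exp (Complex.I ^ 2 * ‖x‖ ^ 2 / (4 * s)) =
      gaussianFourier (dim V / 2) (‖x‖ ^ 2) s := by
    rw [gaussianFourier, Complex.I_sq]
    push_cast [Complex.ofReal_cpow (div_pos pi_pos hs).le]
    ring_nf
  simp only [integrand_eq]
  rw [integral_re (GaussianFourier.integrable_cexp_neg_mul_sq_norm_add hs_re Complex.I x),
    GaussianFourier.integral_cexp_neg_mul_sq_norm_add hs_re Complex.I x, value_eq,
    RCLike.re_eq_complex_re, Complex.ofReal_re]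

namespace IsStableSubordinatorLaw

variable {μ : Measure ℝ}

lemma integrable_prod_exp_mul_cos (hμ : IsStableSubordinatorLaw (α / 2) μ) (hα : 0 < α) (x : V) :
    Integrable (fun z : V × ℝ ↦ exp (-(z.2 * ‖z.1‖ ^ 2)) * cos ⟪x, z.1⟫) (volume.prod μ) := by
  have := hμ.toIsProbabilityMeasure
  have integrable_gaussian :
      Integrable (fun z : V × ℝ ↦ exp (-(z.2 * ‖z.1‖ ^ 2))) (volume.prod μ) := by
    rw [integrable_prod_iff (by fun_prop)]
    refine ⟨ae_of_all _ fun ξ ↦ ?_, ?_⟩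
    · simpa only [mul_comm _ (‖ξ‖ ^ 2)] using
        hμ.integrable_exp_neg_mul (sq_nonneg ‖ξ‖)
    · simpa only [norm_of_nonneg (exp_pos _).le, hμ.integral_exp_neg_mul_sq (norm_nonneg _)] using
        integrable_exp_neg_norm_rpow_s9 volume hα
  exact integrable_gaussian.mul_bdd (c := 1) (by fun_prop) (ae_of_all _ fun z ↦ abs_cos_le_one _)

lemma integral_prod_exp_mul_cos_eq (hμ : IsStableSubordinatorLaw (α / 2) μ) (x : V) :
    (fun s ↦ ∫ ξ : V, exp (-(s * ‖ξ‖ ^ 2)) * cos ⟪x, ξ⟫) =ᵐ[μ]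
      gaussianFourier (dim V / 2) (‖x‖ ^ 2) := by
  filter_upwards [hμ.ae_pos] with s hs using integral_exp_neg_mul_sq_mul_cos x hs

lemma integrable_gaussianFourier (hμ : IsStableSubordinatorLaw (α / 2) μ) (hα : 0 < α) (x : V) :
    Integrable (gaussianFourier (dim V / 2) (‖x‖ ^ 2)) μ := by
  have := hμ.toIsProbabilityMeasure
  exact (hμ.integrable_prod_exp_mul_cos hα x).integral_prod_right.congr
    (hμ.integral_prod_exp_mul_cos_eq x)

theorem integral_exp_neg_norm_rpow_mul_cos (hμ : IsStableSubordinatorLaw (α / 2) μ) (hα : 0 < α)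
    (x : V) : ∫ ξ : V, exp (-‖ξ‖ ^ α) * cos ⟪x, ξ⟫ =
      ∫ s, gaussianFourier (dim V / 2) (‖x‖ ^ 2) s ∂μ := by
  have := hμ.toIsProbabilityMeasure
  calc ∫ ξ : V, exp (-‖ξ‖ ^ α) * cos ⟪x, ξ⟫
      = ∫ ξ : V, ∫ s, exp (-(s * ‖ξ‖ ^ 2)) * cos ⟪x, ξ⟫ ∂μ := by
        simp only [integral_mul_const, hμ.integral_exp_neg_mul_sq (norm_nonneg _)]
    _ = ∫ s, (∫ ξ : V, exp (-(s * ‖ξ‖ ^ 2)) * cos ⟪x, ξ⟫) ∂μ :=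
        integral_integral_swap (hμ.integrable_prod_exp_mul_cos hα x)
    _ = ∫ s, gaussianFourier (dim V / 2) (‖x‖ ^ 2) s ∂μ :=
        integral_congr_ae (hμ.integral_prod_exp_mul_cos_eq x)

lemma integral_gaussianFourier_le (hμ : IsStableSubordinatorLaw (α / 2) μ) (hα : 0 < α) {x : V}
    (hx : x ≠ 0) : ∫ s, gaussianFourier (dim V / 2) (‖x‖ ^ 2) s ∂μ ≤
      (π / ‖x‖ ^ 2) ^ (dim V / 2 : ℝ) * (4 * (dim V / 2 + 1)) ^ (dim V / 2 + 1 : ℝ) *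
        truncatedMean μ (‖x‖ ^ 2) := by
  have sq_pos : 0 < ‖x‖ ^ 2 := by positivity
  rw [truncatedMean, ← integral_const_mul]
  refine integral_mono_ae (hμ.integrable_gaussianFourier hα x)
    ((hμ.integrable_min_one_div sq_pos).const_mul _) ?_
  filter_upwards [hμ.ae_pos] with s hs using gaussianFourier_le (by positivity) sq_pos hs

lemma le_integral_gaussianFourier (hμ : IsStableSubordinatorLaw (α / 2) μ) (hα : 0 < α) {x : V}
    {a R : ℝ} (ha : 0 < a) (hR : 0 < R) (hx : ‖x‖ ^ 2 ≤ R) (K : ℝ) :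
    (π / (K * R)) ^ (dim V / 2 : ℝ) * exp (-(4 * a)⁻¹) * μ.real (Set.Icc (a * R) (K * R)) ≤
      ∫ s, gaussianFourier (dim V / 2) (‖x‖ ^ 2) s ∂μ := by
  have := hμ.toIsProbabilityMeasure
  rw [← integral_indicator_one measurableSet_Icc, ← integral_const_mul]
  refine integral_mono_ae (((integrable_const 1).indicator measurableSet_Icc).const_mul _)
    (hμ.integrable_gaussianFourier hα x) ?_
  filter_upwards [hμ.ae_pos] with s hs
  by_cases hmem : s ∈ Set.Icc (a * R) (K * R)
  · rw [Set.indicator_of_mem hmem, Pi.one_apply, mul_one]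
    exact le_gaussianFourier (by positivity) ha hR hx hmem
  · rw [Set.indicator_of_notMem hmem, mul_zero]
    exact gaussianFourier_nonneg _ _ hs

end IsStableSubordinatorLaw

/-- The density at time one of the isotropic `α`-stable process on `V`, the value at `t = 1` of the
heat kernel `p_t` of the fractional Laplacian. -/
noncomputable def stableDensity (α : ℝ) (x : V) : ℝ :=
  (2 * π) ^ (-(dim V : ℝ)) * ∫ ξ : V, exp (-‖ξ‖ ^ α) * cos ⟪x, ξ⟫

lemma stableDensity_le_zero (hα : 0 < α) (x : V) :
    stableDensity α x ≤ stableDensity α (0 : V) := by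
  have integrable_exp := integrable_exp_neg_norm_rpow_s9 (volume : Measure V) hα
  have integrable_mul_cos : Integrable fun ξ : V ↦ exp (-‖ξ‖ ^ α) * cos ⟪x, ξ⟫ :=
    integrable_exp.mul_bdd (c := 1) (by fun_prop) (ae_of_all _ fun ξ ↦ abs_cos_le_one _)
  unfold stableDensity
  simp only [inner_zero_left, cos_zero, mul_one]
  refine mul_le_mul_of_nonneg_left (integral_mono integrable_mul_cos integrable_exp fun ξ ↦ ?_)
    (by positivity)
  exact mul_le_of_le_one_right (exp_pos _).le (cos_le_one _)

lemma IsStableSubordinatorLaw.stableDensity_eq {μ : Measure ℝ}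
    (hμ : IsStableSubordinatorLaw (α / 2) μ) (hα : 0 < α) (x : V) :
    stableDensity α x =
      (2 * π) ^ (-(dim V : ℝ)) * ∫ s, gaussianFourier (dim V / 2) (‖x‖ ^ 2) s ∂μ := by
  rw [stableDensity, hμ.integral_exp_neg_norm_rpow_mul_cos hα]

variable (V) in
lemma exists_stableDensity_le_mul_norm_rpow (hα0 : 0 < α) (hα2 : α < 2) :
    ∃ C : ℝ, ∀ x : V, x ≠ 0 → stableDensity α x ≤ C * ‖x‖ ^ (-(dim V + α)) := by
  obtain ⟨μ, hμ⟩ := exists_isStableSubordinatorLaw (half_pos hα0) (by linarith)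
  let h : ℝ := dim V / 2
  let M : ℝ := (4 * (h + 1)) ^ (h + 1)
  refine ⟨(2 * π) ^ (-(dim V : ℝ)) * (π ^ h * M * 2), fun x hx ↦ ?_⟩
  have norm_pos : 0 < ‖x‖ := norm_pos_iff.2 hx
  have sq_pos : 0 < ‖x‖ ^ 2 := by positivity
  have sq_rpow (k : ℝ) : (‖x‖ ^ 2) ^ (-(k / 2)) = ‖x‖ ^ (-k) := by
    rw [← rpow_natCast_mul norm_pos.le]
    congr 1
    push_cast
    ring
  rw [hμ.stableDensity_eq hα0, mul_assoc]
  gcongr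
  calc ∫ s, gaussianFourier h (‖x‖ ^ 2) s ∂μ
      ≤ (π / ‖x‖ ^ 2) ^ h * M * truncatedMean μ (‖x‖ ^ 2) := hμ.integral_gaussianFourier_le hα0 hx
    _ ≤ (π / ‖x‖ ^ 2) ^ h * M * (2 * (‖x‖ ^ 2) ^ (-(α / 2))) := by
        gcongr
        exact hμ.truncatedMean_le sq_pos
    _ = π ^ h * M * 2 * ‖x‖ ^ (-(dim V + α)) := by
        rw [div_rpow pi_pos.le sq_pos.le, div_eq_mul_inv, ← rpow_neg sq_pos.le, sq_rpow, sq_rpow,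
          neg_add, rpow_add norm_pos]
        ring

variable (V) in
theorem exists_stableDensity_le_mul_min (hα0 : 0 < α) (hα2 : α < 2) :
    ∃ C > 0, ∀ x : V, x ≠ 0 → stableDensity α x ≤ C * min 1 (‖x‖ ^ (-(dim V + α))) := by
  obtain ⟨C, stableDensity_le⟩ := exists_stableDensity_le_mul_norm_rpow V hα0 hα2
  refine ⟨max 1 (max C (stableDensity α (0 : V))), by positivity, fun x hx ↦ ?_⟩
  rw [mul_min_of_nonneg _ _ (by positivity), mul_one]
  refine le_min ?_ ((stableDensity_le x hx).trans ?_)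
  · exact (stableDensity_le_zero hα0 x).trans ((le_max_right _ _).trans (le_max_right _ _))
  · gcongr
    exact (le_max_left _ _).trans (le_max_right _ _)

lemma max_one_sq_rpow_neg_half {r k : ℝ} (hr : 0 < r) (hk : 0 ≤ k) :
    max 1 (r ^ 2) ^ (-(k / 2)) = min 1 (r ^ (-k)) := by
  rcases le_total r 1 with hr1 | hr1
  · rw [max_eq_left (pow_le_one₀ hr.le hr1), one_rpow,
      min_eq_left (one_le_rpow_of_pos_of_le_one_of_nonpos hr hr1 (neg_nonpos.2 hk))]
  · rw [max_eq_right (one_le_pow₀ hr1), ← rpow_natCast_mul hr.le,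
      min_eq_right (rpow_le_one_of_one_le_of_nonpos hr1 (neg_nonpos.2 hk))]
    congr 1
    push_cast
    ring

variable (V) in
theorem exists_mul_min_le_stableDensity (hα0 : 0 < α) (hα2 : α < 2) :
    ∃ c > 0, ∀ x : V, x ≠ 0 → c * min 1 (‖x‖ ^ (-(dim V + α))) ≤ stableDensity α x := by
  obtain ⟨μ, hμ⟩ := exists_isStableSubordinatorLaw (half_pos hα0) (by linarith)
  obtain ⟨a, a_pos, K, K_pos, rpow_le_real_Icc⟩ :=
    hμ.exists_rpow_neg_div_four_le_real_Icc (half_pos hα0) (by linarith)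
  let h : ℝ := dim V / 2
  refine ⟨(2 * π) ^ (-(dim V : ℝ)) * ((π / K) ^ h * exp (-(4 * a)⁻¹) / 4), by positivity,
    fun x hx ↦ ?_⟩
  let R : ℝ := max 1 (‖x‖ ^ 2)
  have R_pos : 0 < R := by positivity
  rw [hμ.stableDensity_eq hα0, mul_assoc]
  gcongr
  calc (π / K) ^ h * exp (-(4 * a)⁻¹) / 4 * min 1 (‖x‖ ^ (-(dim V + α)))
      = (π / (K * R)) ^ h * exp (-(4 * a)⁻¹) * (R ^ (-(α / 2)) / 4) := by
        rw [← max_one_sq_rpow_neg_half (norm_pos_iff.2 hx) (by positivity), add_div, neg_add,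
          rpow_add R_pos, rpow_neg R_pos.le, ← div_div, div_rpow (by positivity) R_pos.le]
        ring
    _ ≤ (π / (K * R)) ^ h * exp (-(4 * a)⁻¹) * μ.real (Set.Icc (a * R) (K * R)) := by
        gcongr
        exact rpow_le_real_Icc R (le_max_left _ _)
    _ ≤ ∫ s, gaussianFourier h (‖x‖ ^ 2) s ∂μ :=
        hμ.le_integral_gaussianFourier hα0 a_pos R_pos (le_max_right _ _) K

variable (V) in
theorem stmt_9_general (hα0 : 0 < α) (hα2 : α < 2) :
    ∃ c : ℝ, 0 < c ∧ ∀ x : V, x ≠ 0 →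
      c⁻¹ * stableDensity α x ≤ min 1 (stableLevyDensity α x) ∧
        min 1 (stableLevyDensity α x) ≤ c * stableDensity α x := by
  obtain ⟨C, C_pos, le_mul_min⟩ := exists_stableDensity_le_mul_min V hα0 hα2
  obtain ⟨c, c_pos, mul_min_le⟩ := exists_mul_min_le_stableDensity V hα0 hα2
  let A : ℝ := stableLevyConst (dim V) α
  let c₀ : ℝ := max (C * max 1 A⁻¹) (max 1 A / c)
  refine ⟨c₀, by positivity, fun x hx ↦ ⟨?_, ?_⟩⟩
  · have A_pos : 0 < A := stableLevyConst_pos (by positivity) hα0 hα2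
    have min_nonneg : 0 ≤ min 1 (stableLevyDensity α x) :=
      le_min zero_le_one (mul_nonneg A_pos.le (by positivity))
    rw [inv_mul_le_iff₀ (by positivity)]
    calc stableDensity α x ≤ C * min 1 (‖x‖ ^ (-(dim V + α))) := le_mul_min x hx
      _ ≤ C * (max 1 A⁻¹ * min 1 (stableLevyDensity α x)) := by
        gcongr
        exact min_one_norm_rpow_le hα0 hα2 x
      _ ≤ c₀ * min 1 (stableLevyDensity α x) := by
        rw [← mul_assoc]
        gcongr
        exact le_max_left _ _
  · have density_nonneg : 0 ≤ stableDensity α x := le_trans (by positivity) (mul_min_le x hx)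
    calc min 1 (stableLevyDensity α x) ≤ max 1 A * min 1 (‖x‖ ^ (-(dim V + α))) :=
          min_one_stableLevyDensity_le α x
      _ ≤ max 1 A * (stableDensity α x / c) := by
        gcongr
        rw [le_div_iff₀' c_pos]
        exact mul_min_le x hx
      _ = max 1 A / c * stableDensity α x := by ring
      _ ≤ c₀ * stableDensity α x := by
        gcongr
        exact le_max_right _ _

end HeatKernel

/-- There is `c = c(d,α) ∈ (0,∞)` such that for every `x ≠ 0`,
`c⁻¹ p_1(x) ≤ min(1, ν(x)) ≤ c p_1(x)`. -/
theorem stmt_9 (d : ℕ) (hd : 1 ≤ d) (α : ℝ) (hα0 : 0 < α) (hα2 : α < 2)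
    (ν : EuclideanSpace ℝ (Fin d) → ℝ)
    (hν : ∀ y : EuclideanSpace ℝ (Fin d), y ≠ 0 →
      ν y = (2 : ℝ) ^ α * Real.Gamma (((d : ℝ) + α) / 2) /
        (Real.pi ^ ((d : ℝ) / 2) * |Real.Gamma (-α / 2)|) * ‖y‖ ^ (-((d : ℝ) + α)))
    (p : ℝ → EuclideanSpace ℝ (Fin d) → ℝ)
    (hp : ∀ t : ℝ, 0 < t → ∀ x : EuclideanSpace ℝ (Fin d),
      p t x = (2 * Real.pi) ^ (-(d : ℝ)) *
        ∫ ξ : EuclideanSpace ℝ (Fin d), Real.exp (-(t * ‖ξ‖ ^ α)) * Real.cos ⟪x, ξ⟫) :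
    ∃ c : ℝ, 0 < c ∧
      ∀ x : EuclideanSpace ℝ (Fin d), x ≠ 0 →
        c⁻¹ * p 1 x ≤ min 1 (ν x) ∧ min 1 (ν x) ≤ c * p 1 x := by
  obtain ⟨c, c_pos, hc⟩ := stmt_9_general (EuclideanSpace ℝ (Fin d)) hα0 hα2
  refine ⟨c, c_pos, fun x hx ↦ ?_⟩
  simpa [hν x hx, hp 1 one_pos x, stableDensity, stableLevyDensity, stableLevyConst] using hc x hx
end

section
/- There is a constant C = C(d, α) ∈ (0, ∞) such that for every x ∈ ℝ^d with |x| < 1 and every R ≥ 2, C^{−1} (1 − |x|)^{α/2} R^{−α} ≤ ∫_{{y : |y| ≥ R}} 𝒞(d,α) ((1 − |x|²)/(|y|² − 1))^{α/2} |x − y|^{−d} dy ≤ C (1 − |x|)^{α/2} R^{−α}. -/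
open MeasureTheory Real Filter
open scoped RealInnerProductSpace Topology

/-!
If `‖x‖ < 1 < c ≤ ‖y‖`, then `‖x - y‖` is comparable to `‖y‖`, and `(1 - ‖x‖²) / (‖y‖² - 1)` is
comparable to `(1 - ‖x‖) / ‖y‖²`. The Poisson kernel is therefore comparable to
`(1 - ‖x‖) ^ (α / 2) * ‖y‖ ^ (-(d + α))`, whose integral over `R ≤ ‖y‖` is computed in polar
coordinates and is proportional to `(1 - ‖x‖) ^ (α / 2) * R ^ (-α)`.
-/

open Module Metric Set

section RadialIntegrals

lemma restrict_Ioi_restrict_Ici_of_le {a b : ℝ} (hab : a ≤ b) :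
    ((volume : Measure ℝ).restrict (Ioi a)).restrict (Ici b) = volume.restrict (Ioi b) := by
  have hinter : (Ici b ∩ Ioi a : Set ℝ) =ᵐ[volume] Ioi b := by
    simpa [Ioi_inter_Ioi, hab] using
      (Ioi_ae_eq_Ici (μ := volume) (a := b)).symm.inter (ae_eq_refl (Ioi a))
  rw [Measure.restrict_restrict measurableSet_Ici, Measure.restrict_congr_set hinter]

lemma measurableSet_setOf_le_norm {E : Type*} [NormedAddCommGroup E] [MeasurableSpace E]
    [OpensMeasurableSpace E] (R : ℝ) : MeasurableSet {y : E | R ≤ ‖y‖} :=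
  measurableSet_le measurable_const measurable_norm

variable {E F : Type*} [NormedAddCommGroup E] [NormedSpace ℝ E] [FiniteDimensional ℝ E]
  [Nontrivial E] [MeasurableSpace E] [BorelSpace E] [NormedAddCommGroup F] [NormedSpace ℝ F]
  (μ : Measure E) [μ.IsAddHaarMeasure] {R α : ℝ}

lemma integrableOn_fun_norm_of_le_norm_iff (f : ℝ → F) (hR : 0 ≤ R) :
    IntegrableOn (fun y ↦ f ‖y‖) {y : E | R ≤ ‖y‖} μ ↔
      IntegrableOn (fun t ↦ t ^ (finrank ℝ E - 1) • f t) (Ioi R) := by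
  have hind : {y : E | R ≤ ‖y‖}.indicator (fun y ↦ f ‖y‖) = fun y ↦ (Ici R).indicator f ‖y‖ := rfl
  rw [← integrable_indicator_iff (measurableSet_setOf_le_norm R), hind, integrable_fun_norm_addHaar,
    ← indicator_smul, IntegrableOn, integrable_indicator_iff measurableSet_Ici, IntegrableOn,
    restrict_Ioi_restrict_Ici_of_le hR, IntegrableOn]

lemma setIntegral_fun_norm_of_le_norm (f : ℝ → F) (hR : 0 ≤ R) :
    ∫ y in {y : E | R ≤ ‖y‖}, f ‖y‖ ∂μ =
      finrank ℝ E • μ.real (ball 0 1) • ∫ t in Ioi R, t ^ (finrank ℝ E - 1) • f t := by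
  have hind : {y : E | R ≤ ‖y‖}.indicator (fun y ↦ f ‖y‖) = fun y ↦ (Ici R).indicator f ‖y‖ := rfl
  rw [← integral_indicator (measurableSet_setOf_le_norm R), hind, integral_fun_norm_addHaar,
    ← indicator_smul, integral_indicator measurableSet_Ici, restrict_Ioi_restrict_Ici_of_le hR]

lemma pow_pred_mul_rpow_neg_add {n : ℕ} (hn : 0 < n) {t : ℝ} (ht : 0 < t) (α : ℝ) :
    t ^ (n - 1) * t ^ (-(n + α)) = t ^ (-α - 1) := by
  rw [← rpow_natCast, ← rpow_add ht, Nat.cast_pred hn]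
  ring_nf

lemma integrableOn_norm_rpow_neg_finrank_add (hα : 0 < α) (hR : 0 < R) :
    IntegrableOn (fun y : E ↦ ‖y‖ ^ (-(finrank ℝ E + α))) {y | R ≤ ‖y‖} μ := by
  rw [integrableOn_fun_norm_of_le_norm_iff μ (· ^ (-(finrank ℝ E + α))) hR.le]
  refine (integrableOn_Ioi_rpow_of_lt (a := -α - 1) (by linarith) hR).congr_fun
    (fun t ht ↦ ?_) measurableSet_Ioi
  exact (pow_pred_mul_rpow_neg_add finrank_pos (hR.trans ht) α).symm

lemma setIntegral_norm_rpow_neg_finrank_add (hα : 0 < α) (hR : 0 < R) :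
    ∫ y in {y : E | R ≤ ‖y‖}, ‖y‖ ^ (-(finrank ℝ E + α)) ∂μ =
      finrank ℝ E * μ.real (ball 0 1) / α * R ^ (-α) := by
  have hradial : ∫ t in Ioi R, t ^ (finrank ℝ E - 1) • t ^ (-(finrank ℝ E + α)) = R ^ (-α) / α :=
    calc
      _ = ∫ t in Ioi R, t ^ (-α - 1) :=
        setIntegral_congr_fun measurableSet_Ioi fun t ht ↦
          pow_pred_mul_rpow_neg_add finrank_pos (hR.trans ht) α
      _ = R ^ (-α) / α := by
        rw [integral_Ioi_rpow_of_lt (by linarith) hR, sub_add_cancel, neg_div_neg_eq]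
  rw [setIntegral_fun_norm_of_le_norm μ (· ^ (-(finrank ℝ E + α))) hR.le, hradial, nsmul_eq_mul,
    smul_eq_mul]
  ring

end RadialIntegrals

section BallPoissonKernel

variable {E : Type*} [NormedAddCommGroup E] {x y : E} {c α : ℝ}

lemma norm_sub_le_two_mul_norm (hxy : ‖x‖ ≤ ‖y‖) : ‖x - y‖ ≤ 2 * ‖y‖ := by
  linarith [norm_sub_le x y]

lemma one_sub_inv_mul_norm_le_norm_sub (hc : 0 < c) (hx : ‖x‖ ≤ 1) (hy : c ≤ ‖y‖) :
    (1 - c⁻¹) * ‖y‖ ≤ ‖x - y‖ := by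
  have hscale : 1 ≤ c⁻¹ * ‖y‖ := by rwa [inv_mul_eq_div, one_le_div hc]
  linarith [norm_sub_norm_le y x, norm_sub_rev x y]

lemma one_sub_div_sq_le {s t : ℝ} (hs₀ : 0 ≤ s) (hs₁ : s ≤ 1) (ht : 1 < t) :
    (1 - s) / t ^ 2 ≤ (1 - s ^ 2) / (t ^ 2 - 1) :=
  div_le_div₀ (by nlinarith) (by nlinarith) (by nlinarith) (by linarith)

lemma one_sub_sq_div_le {s t : ℝ} (hs : s ≤ 1) (hc : 1 < c) (ht : c ≤ t) :
    (1 - s ^ 2) / (t ^ 2 - 1) ≤ 2 / (1 - (c ^ 2)⁻¹) * ((1 - s) / t ^ 2) := by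
  have hc₀ : 0 < 1 - (c ^ 2)⁻¹ := sub_pos.2 (inv_lt_one_of_one_lt₀ (one_lt_pow₀ hc two_ne_zero))
  have hscale : 1 ≤ (c ^ 2)⁻¹ * t ^ 2 := by
    rw [inv_mul_eq_div, one_le_div (by positivity)]
    gcongr
  have ht₀ : 0 < t := by linarith
  rw [div_mul_div_comm]
  exact div_le_div₀ (by linarith) (by nlinarith) (by positivity) (by linarith)

lemma div_sq_rpow_half {s t : ℝ} (hs : 0 ≤ s) (ht : 0 ≤ t) (α : ℝ) :
    (s / t ^ 2) ^ (α / 2) = s ^ (α / 2) * t ^ (-α) := by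
  rw [div_rpow hs (sq_nonneg t), ← rpow_natCast_mul ht, rpow_neg ht, div_eq_mul_inv]
  congr 3
  push_cast
  ring

variable [NormedSpace ℝ E]

/-- For Euclidean `E` and `‖x‖ < 1 < ‖y‖`, the Poisson kernel of the unit ball for the fractional
Laplacian of order `α`, up to the normalizing constant `𝒞(d, α)`. The same formula is used for
every norm, with `d` the dimension of `E`. -/
noncomputable def ballPoissonKernel (α : ℝ) (x y : E) : ℝ :=
  ((1 - ‖x‖ ^ 2) / (‖y‖ ^ 2 - 1)) ^ (α / 2) * ‖x - y‖ ^ (-(finrank ℝ E : ℝ))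

lemma norm_rpow_neg_finrank_add (hy : 0 < ‖y‖) :
    ‖y‖ ^ (-(finrank ℝ E + α)) = ‖y‖ ^ (-α) * ‖y‖ ^ (-(finrank ℝ E : ℝ)) := by
  rw [← rpow_add hy, neg_add_rev]

lemma le_ballPoissonKernel (hα : 0 ≤ α) (hx : ‖x‖ ≤ 1) (hy : 1 < ‖y‖) :
    2 ^ (-(finrank ℝ E : ℝ)) * (1 - ‖x‖) ^ (α / 2) * ‖y‖ ^ (-(finrank ℝ E + α)) ≤
      ballPoissonKernel α x y := by
  have hy₀ : 0 < ‖y‖ := by linarith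
  have hx₀ : 0 ≤ 1 - ‖x‖ := by linarith
  have hxy : 0 < ‖x - y‖ := by linarith [norm_sub_norm_le y x, norm_sub_rev x y]
  calc
    _ = ((1 - ‖x‖) / ‖y‖ ^ 2) ^ (α / 2) * (2 * ‖y‖) ^ (-(finrank ℝ E : ℝ)) := by
      rw [div_sq_rpow_half hx₀ hy₀.le, mul_rpow two_pos.le hy₀.le, norm_rpow_neg_finrank_add hy₀]
      ring
    _ ≤ ballPoissonKernel α x y := by
      have hdist : (2 * ‖y‖) ^ (-(finrank ℝ E : ℝ)) ≤ ‖x - y‖ ^ (-(finrank ℝ E : ℝ)) :=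
        rpow_le_rpow_of_nonpos hxy (norm_sub_le_two_mul_norm (hx.trans hy.le)) (by simp)
      have hquot := one_sub_div_sq_le (norm_nonneg x) hx hy
      exact mul_le_mul (rpow_le_rpow (by positivity) hquot (by positivity)) hdist (by positivity)
        (rpow_nonneg (hquot.trans' (by positivity)) _)

lemma ballPoissonKernel_nonneg (hx : ‖x‖ ≤ 1) (hy : 1 ≤ ‖y‖) : 0 ≤ ballPoissonKernel α x y := by
  have hquot : 0 ≤ (1 - ‖x‖ ^ 2) / (‖y‖ ^ 2 - 1) :=
    div_nonneg (by nlinarith [norm_nonneg x]) (by nlinarith)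
  unfold ballPoissonKernel
  positivity

lemma ballPoissonKernel_le (hα : 0 ≤ α) (hc : 1 < c) (hx : ‖x‖ ≤ 1) (hy : c ≤ ‖y‖) :
    ballPoissonKernel α x y ≤
      (2 / (1 - (c ^ 2)⁻¹)) ^ (α / 2) * (1 - c⁻¹) ^ (-(finrank ℝ E : ℝ)) *
        (1 - ‖x‖) ^ (α / 2) * ‖y‖ ^ (-(finrank ℝ E + α)) := by
  have hy₁ : 1 < ‖y‖ := by linarith
  have hy₀ : 0 < ‖y‖ := by linarith
  have hx₀ : 0 ≤ 1 - ‖x‖ := by linarith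
  have hc₁ : 0 < 1 - c⁻¹ := sub_pos.2 (inv_lt_one_of_one_lt₀ hc)
  have hc₂ : 0 < 1 - (c ^ 2)⁻¹ := sub_pos.2 (inv_lt_one_of_one_lt₀ (one_lt_pow₀ hc two_ne_zero))
  have hquot : 0 ≤ (1 - ‖x‖ ^ 2) / (‖y‖ ^ 2 - 1) :=
    (by positivity : 0 ≤ (1 - ‖x‖) / ‖y‖ ^ 2).trans (one_sub_div_sq_le (norm_nonneg x) hx hy₁)
  calc
    ballPoissonKernel α x y ≤ (2 / (1 - (c ^ 2)⁻¹) * ((1 - ‖x‖) / ‖y‖ ^ 2)) ^ (α / 2) *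
        ((1 - c⁻¹) * ‖y‖) ^ (-(finrank ℝ E : ℝ)) := by
      have hdist : ‖x - y‖ ^ (-(finrank ℝ E : ℝ)) ≤ ((1 - c⁻¹) * ‖y‖) ^ (-(finrank ℝ E : ℝ)) :=
        rpow_le_rpow_of_nonpos (by positivity)
          (one_sub_inv_mul_norm_le_norm_sub (by linarith) hx hy) (by simp)
      unfold ballPoissonKernel
      gcongr
      exact one_sub_sq_div_le hx hc hy
    _ = _ := by
      rw [mul_rpow (by positivity) (by positivity), div_sq_rpow_half hx₀ hy₀.le,
        mul_rpow hc₁.le hy₀.le, norm_rpow_neg_finrank_add hy₀]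
      ring

variable [MeasurableSpace E] [BorelSpace E]

lemma measurable_ballPoissonKernel (α : ℝ) (x : E) : Measurable (ballPoissonKernel α x) := by
  unfold ballPoissonKernel
  fun_prop

variable [FiniteDimensional ℝ E] [Nontrivial E] (μ : Measure E) [μ.IsAddHaarMeasure] {R : ℝ}

lemma integrableOn_ballPoissonKernel (hα : 0 < α) (hx : ‖x‖ ≤ 1) (hR : 1 < R) :
    IntegrableOn (ballPoissonKernel α x) {y | R ≤ ‖y‖} μ := by
  have hdecay := integrableOn_norm_rpow_neg_finrank_add μ hα (zero_lt_one.trans hR)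
  refine (hdecay.const_mul _).mono' (measurable_ballPoissonKernel α x).aestronglyMeasurable
    (ae_restrict_of_forall_mem (measurableSet_setOf_le_norm R) fun y hy ↦
      (norm_of_nonneg (ballPoissonKernel_nonneg hx (hR.le.trans hy))).trans_le
        (ballPoissonKernel_le hα.le hR hx hy))

lemma le_setIntegral_ballPoissonKernel (hα : 0 < α) (hx : ‖x‖ ≤ 1) (hR : 1 < R) :
    2 ^ (-(finrank ℝ E : ℝ)) * (finrank ℝ E * μ.real (ball 0 1) / α) *
        ((1 - ‖x‖) ^ (α / 2) * R ^ (-α)) ≤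
      ∫ y in {y | R ≤ ‖y‖}, ballPoissonKernel α x y ∂μ := by
  have hdecay := integrableOn_norm_rpow_neg_finrank_add μ hα (zero_lt_one.trans hR)
  have hmono := setIntegral_mono_on (hdecay.const_mul _) (integrableOn_ballPoissonKernel μ hα hx hR)
    (measurableSet_setOf_le_norm R) fun y hy ↦ le_ballPoissonKernel hα.le hx (hR.trans_le hy)
  rw [integral_const_mul, setIntegral_norm_rpow_neg_finrank_add μ hα (by linarith)] at hmono
  exact hmono.trans_eq' (by ring)

lemma setIntegral_ballPoissonKernel_le (hα : 0 < α) (hc : 1 < c) (hx : ‖x‖ ≤ 1) (hR : c ≤ R) :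
    ∫ y in {y | R ≤ ‖y‖}, ballPoissonKernel α x y ∂μ ≤
      (2 / (1 - (c ^ 2)⁻¹)) ^ (α / 2) * (1 - c⁻¹) ^ (-(finrank ℝ E : ℝ)) *
        (finrank ℝ E * μ.real (ball 0 1) / α) * ((1 - ‖x‖) ^ (α / 2) * R ^ (-α)) := by
  have hR₁ : 1 < R := hc.trans_le hR
  have hdecay := integrableOn_norm_rpow_neg_finrank_add μ hα (zero_lt_one.trans hR₁)
  have hmono := setIntegral_mono_on (integrableOn_ballPoissonKernel μ hα hx hR₁)
    (hdecay.const_mul _) (measurableSet_setOf_le_norm R)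
    fun y hy ↦ ballPoissonKernel_le hα.le hc hx (hR.trans hy)
  rw [integral_const_mul, setIntegral_norm_rpow_neg_finrank_add μ hα (by linarith)] at hmono
  exact hmono.trans_eq (by ring)

theorem stmt_11_general {κ : ℝ} (hκ : 0 < κ) (hα : 0 < α) (hc : 1 < c) :
    ∃ C : ℝ, 0 < C ∧ ∀ x : E, ‖x‖ ≤ 1 → ∀ R : ℝ, c ≤ R →
      C⁻¹ * ((1 - ‖x‖) ^ (α / 2) * R ^ (-α)) ≤
          ∫ y in {y | R ≤ ‖y‖}, κ * ballPoissonKernel α x y ∂μ ∧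
        ∫ y in {y | R ≤ ‖y‖}, κ * ballPoissonKernel α x y ∂μ ≤
          C * ((1 - ‖x‖) ^ (α / 2) * R ^ (-α)) := by
  set V := finrank ℝ E * μ.real (ball 0 1) / α
  set a := 2 ^ (-(finrank ℝ E : ℝ)) * V
  set b := (2 / (1 - (c ^ 2)⁻¹)) ^ (α / 2) * (1 - c⁻¹) ^ (-(finrank ℝ E : ℝ)) * V
  have hV : 0 < V := by
    have : 0 < μ.real (ball (0 : E) 1) := ENNReal.toReal_pos
      (measure_ball_pos μ _ one_pos).ne' measure_ball_lt_top.ne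
    have : 0 < finrank ℝ E := finrank_pos
    positivity
  have hκa : 0 < κ * a := by positivity
  refine ⟨max (κ * b) (κ * a)⁻¹, lt_max_of_lt_right (inv_pos.2 hκa), fun x hx R hR ↦ ?_⟩
  have hscale : 0 ≤ (1 - ‖x‖) ^ (α / 2) * R ^ (-α) :=
    mul_nonneg (rpow_nonneg (by linarith) _) (rpow_nonneg (by linarith) _)
  rw [integral_const_mul]
  constructor
  · calc
      _ ≤ κ * a * ((1 - ‖x‖) ^ (α / 2) * R ^ (-α)) := by
        gcongr
        exact inv_le_of_inv_le₀ hκa (le_max_right _ _)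
      _ ≤ _ := by
        rw [mul_assoc]
        gcongr
        exact le_setIntegral_ballPoissonKernel μ hα hx (hc.trans_le hR)
  · calc
      _ ≤ κ * b * ((1 - ‖x‖) ^ (α / 2) * R ^ (-α)) := by
        rw [mul_assoc]
        gcongr
        exact setIntegral_ballPoissonKernel_le μ hα hc hx hR
      _ ≤ _ := by
        gcongr
        exact le_max_left _ _

end BallPoissonKernel

/-- The normalizing constant `𝒞(d, α)` of the Poisson kernel of the unit ball of `ℝ^d` for the
fractional Laplacian of order `α`. -/
noncomputable def ballPoissonConst (d : ℕ) (α : ℝ) : ℝ :=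
  Gamma (d / 2) * π ^ (-1 - (d : ℝ) / 2) * sin (π * α / 2)

lemma ballPoissonConst_pos {d : ℕ} (hd : 0 < d) {α : ℝ} (hα₀ : 0 < α) (hα₂ : α < 2) :
    0 < ballPoissonConst d α := by
  have hsin : 0 < sin (π * α / 2) :=
    sin_pos_of_pos_of_lt_pi (by positivity) (by nlinarith [pi_pos])
  unfold ballPoissonConst
  positivity

/-- There is `C = C(d,α) ∈ (0,∞)` such that for `|x| < 1` and `R ≥ 2`,
`∫_{|y| ≥ R} P_{B(0,1)}(x,y) dy ≍ (1−|x|)^{α/2} R^{−α}`, where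
`P_{B(0,1)}(x,y) = 𝒞(d,α) ((1−|x|²)/(|y|²−1))^{α/2} |x−y|^{−d}`. -/
theorem stmt_11 (d : ℕ) (hd : 1 ≤ d) (α : ℝ) (hα0 : 0 < α) (hα2 : α < 2) :
    ∃ C : ℝ, 0 < C ∧
      ∀ x : EuclideanSpace ℝ (Fin d), ‖x‖ < 1 → ∀ R : ℝ, 2 ≤ R →
        C⁻¹ * ((1 - ‖x‖) ^ (α / 2) * R ^ (-α)) ≤
          (∫ y in {y : EuclideanSpace ℝ (Fin d) | R ≤ ‖y‖},
            Real.Gamma ((d : ℝ) / 2) * Real.pi ^ (-1 - (d : ℝ) / 2) * Real.sin (Real.pi * α / 2) *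
              ((1 - ‖x‖ ^ 2) / (‖y‖ ^ 2 - 1)) ^ (α / 2) * ‖x - y‖ ^ (-(d : ℝ))) ∧
        (∫ y in {y : EuclideanSpace ℝ (Fin d) | R ≤ ‖y‖},
            Real.Gamma ((d : ℝ) / 2) * Real.pi ^ (-1 - (d : ℝ) / 2) * Real.sin (Real.pi * α / 2) *
              ((1 - ‖x‖ ^ 2) / (‖y‖ ^ 2 - 1)) ^ (α / 2) * ‖x - y‖ ^ (-(d : ℝ)))
          ≤ C * ((1 - ‖x‖) ^ (α / 2) * R ^ (-α)) := by
  have : NeZero d := ⟨by lia⟩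
  obtain ⟨C, hC, hbounds⟩ := stmt_11_general (volume : Measure (EuclideanSpace ℝ (Fin d)))
    (ballPoissonConst_pos hd hα0 hα2) hα0 one_lt_two
  exact ⟨C, hC, fun x hx ↦ by
    simpa only [ballPoissonConst, ballPoissonKernel, finrank_euclideanSpace_fin, mul_assoc]
      using hbounds x hx.le⟩
end

section
/- Let D ⊆ ℝ^d be open, nonempty, with D ≠ ℝ^d, and suppose D is of class C^{1,1} at scale r > 0, i.e., for every Q in the topological boundary of D there exist points x', x'' ∈ ℝ^d with |x' − Q| = |x'' − Q| = r, B(x', r) ⊆ D and B(x'', r) ⊆ ℝ^d \ D. Then D is (1/2, p)-fat for every p ∈ (0, r]: for every x ∈ D and every p ∈ (0, r] there exists A ∈ ℝ^d with the open ball B(A, p/2) contained in D ∩ B(x, p). -/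
/-!
If the distance from `x ∈ D` to `Dᶜ` is at least `p / 2`, take `A = x`. Otherwise let `Q` be a
boundary point nearest to `x`. Three balls touch at `Q`: the interior tangent ball, the exterior
one, and the largest ball in `D` around `x`. The exterior ball is disjoint from the other two, so
by strict convexity `Q` lies between its center and each of the other centers. Hence `x` and the
center of the interior ball lie on one ray from `Q`, and the point `A` on that ray at distance
`p / 2` from `Q` works, because distances between points of a ray are differences of distances to
`Q`.
-/

open Metric

section Definitions

variable {α : Type*} [PseudoMetricSpace α]

/-- `D` is `(κ, r)`-fat at `x`: `D ∩ ball x r` contains a ball of radius `κ * r`.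
The bounds `0 < r` and `0 < κ ≤ 1` are not part of the definition. -/
def IsFatAt (D : Set α) (κ r : ℝ) (x : α) : Prop :=
  ∃ A, ball A (κ * r) ⊆ D ∩ ball x r

/-- The two-sided ball condition of radius `r`, the geometric form of "`D` is of class `C^{1,1}` at
scale `r`": balls of radius `r` inside and outside `D` touch each boundary point.
Openness of `D` is not part of the definition. -/
def HasTwoSidedTangentBalls (D : Set α) (r : ℝ) : Prop :=
  ∀ Q ∈ frontier D, ∃ x' x'' : α,
    dist x' Q = r ∧ dist x'' Q = r ∧ ball x' r ⊆ D ∧ ball x'' r ⊆ Dᶜ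

end Definitions

variable {E : Type*} [NormedAddCommGroup E] [NormedSpace ℝ E]

theorem wbtw_of_disjoint_ball_dist [StrictConvexSpace ℝ E] {a b Q : E}
    (h : Disjoint (ball a (dist a Q)) (ball b (dist b Q))) : Wbtw ℝ a Q b := by
  rcases eq_or_ne a Q with rfl | ha
  · exact wbtw_self_left ℝ a b
  rcases eq_or_ne b Q with rfl | hb
  · exact wbtw_self_right ℝ a b
  have hle : dist a Q + dist b Q ≤ dist a b :=
    (disjoint_ball_ball_iff (dist_pos.2 ha) (dist_pos.2 hb)).1 h
  rw [dist_comm b Q] at hle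
  exact dist_add_dist_eq_iff.1 (hle.antisymm (dist_triangle a Q b))

theorem sameRay_sub_of_disjoint_ball_dist [StrictConvexSpace ℝ E] {x y z Q : E} (hz : z ≠ Q)
    (hx : Disjoint (ball x (dist x Q)) (ball z (dist z Q)))
    (hy : Disjoint (ball y (dist y Q)) (ball z (dist z Q))) :
    SameRay ℝ (x - Q) (y - Q) := by
  have hxz : SameRay ℝ (Q - x) (z - Q) := (wbtw_of_disjoint_ball_dist hx).sameRay_vsub
  have hyz : SameRay ℝ (Q - y) (z - Q) := (wbtw_of_disjoint_ball_dist hy).sameRay_vsub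
  have hxy : SameRay ℝ (Q - x) (Q - y) :=
    hxz.trans hyz.symm fun h => absurd h (sub_ne_zero.2 hz)
  simpa only [neg_sub] using hxy.neg

theorem dist_eq_abs_dist_sub_dist_of_sameRay {x y Q : E} (h : SameRay ℝ (x - Q) (y - Q)) :
    dist x y = |dist x Q - dist y Q| := by
  simpa only [sub_sub_sub_cancel_right, ← dist_eq_norm] using h.norm_sub

theorem exists_sameRay_sub_dist_eq {y Q : E} (hy : y ≠ Q) {s : ℝ} (hs : 0 ≤ s) :
    ∃ A, SameRay ℝ (A - Q) (y - Q) ∧ dist A Q = s := by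
  have hyQ : 0 < dist y Q := dist_pos.2 hy
  refine ⟨AffineMap.lineMap Q y (s / dist y Q), ?_, ?_⟩
  · rw [← vsub_eq_sub, AffineMap.lineMap_vsub_left]
    exact SameRay.sameRay_nonneg_smul_left _ (by positivity)
  · rw [dist_lineMap_left, Real.norm_of_nonneg (by positivity), dist_comm Q y,
      div_mul_cancel₀ s hyQ.ne']

theorem exists_ball_subset_ball_inter_ball_of_sameRay {x y Q : E} (hy : y ≠ Q)
    (h : SameRay ℝ (x - Q) (y - Q)) {s : ℝ} (hxs : dist x Q ≤ s) (hsy : s ≤ dist y Q) :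
    ∃ A, ball A s ⊆ ball y (dist y Q) ∩ ball x (2 * s) := by
  obtain ⟨A, hA, hAQ⟩ := exists_sameRay_sub_dist_eq hy (dist_nonneg.trans hxs)
  have hAx : dist A x ≤ s := by
    have hray : SameRay ℝ (A - Q) (x - Q) :=
      hA.trans h.symm fun h0 => absurd h0 (sub_ne_zero.2 hy)
    rw [dist_eq_abs_dist_sub_dist_of_sameRay hray, hAQ, abs_of_nonneg (sub_nonneg.2 hxs)]
    exact sub_le_self s dist_nonneg
  have hAy : dist A y = dist y Q - s := by
    rw [dist_eq_abs_dist_sub_dist_of_sameRay hA, hAQ, abs_sub_comm,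
      abs_of_nonneg (sub_nonneg.2 hsy)]
  exact ⟨A, Set.subset_inter (ball_subset_ball' (by linarith)) (ball_subset_ball' (by linarith))⟩

theorem stmt_15_general [StrictConvexSpace ℝ E] [FiniteDimensional ℝ E] {D : Set E} {r : ℝ}
    (hD : HasTwoSidedTangentBalls D r) {x : E} (hx : x ∈ D) {p : ℝ} (hp : 0 < p)
    (hpr : p ≤ 2 * r) : IsFatAt D (1 / 2) p x := by
  by_cases hball : ball x (1 / 2 * p) ⊆ D
  · exact ⟨x, Set.subset_inter hball (ball_subset_ball (by linarith))⟩
  have hDuniv : D ≠ Set.univ := fun h => hball (h ▸ Set.subset_univ _)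
  obtain ⟨Q, hQ, hxQ⟩ := exists_mem_frontier_infDist_compl_eq_dist hx hDuniv
  have hxD : ball x (dist x Q) ⊆ D := hxQ ▸ ball_infDist_compl_subset
  have hclose : dist x Q ≤ 1 / 2 * p :=
    le_of_not_ge fun hle => hball ((ball_subset_ball hle).trans hxD)
  obtain ⟨y, z, rfl, hz, hyD, hzD⟩ := hD Q hQ
  have hyQ : y ≠ Q := dist_pos.1 (by linarith)
  have hzQ : z ≠ Q := dist_pos.1 (by linarith)
  have hray : SameRay ℝ (x - Q) (y - Q) := by
    rw [← hz] at hzD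
    exact sameRay_sub_of_disjoint_ball_dist hzQ
      (disjoint_compl_right.mono hxD hzD) (disjoint_compl_right.mono hyD hzD)
  obtain ⟨A, hA⟩ := exists_ball_subset_ball_inter_ball_of_sameRay hyQ hray hclose (by linarith)
  rw [show 2 * (1 / 2 * p) = p by ring] at hA
  exact ⟨A, hA.trans (Set.inter_subset_inter_left _ hyD)⟩

/-- A `C^{1,1}` open set at scale `r` (inner and outer tangent balls of
radius `r` at every boundary point) is `(1/2, p)`-fat for every `p ∈ (0, r]`. -/
theorem stmt_15 (d : ℕ) (hd : 1 ≤ d) (D : Set (EuclideanSpace ℝ (Fin d)))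
    (hDo : IsOpen D) (hDne : D.Nonempty) (hDuniv : D ≠ Set.univ)
    (r : ℝ) (hr : 0 < r)
    (hC11 : ∀ Q ∈ frontier D, ∃ x' x'' : EuclideanSpace ℝ (Fin d),
      ‖x' - Q‖ = r ∧ ‖x'' - Q‖ = r ∧ Metric.ball x' r ⊆ D ∧ Metric.ball x'' r ⊆ Dᶜ) :
    ∀ x ∈ D, ∀ p : ℝ, 0 < p → p ≤ r →
      ∃ A : EuclideanSpace ℝ (Fin d),
        Metric.ball A (p / 2) ⊆ D ∩ Metric.ball x p := by
  have hD : HasTwoSidedTangentBalls D r := by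
    simpa only [HasTwoSidedTangentBalls, dist_eq_norm] using hC11
  intro x hx p hp hpr
  simpa only [IsFatAt, one_div_mul_eq_div] using stmt_15_general hD hx hp (by linarith)
end
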